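/- Assume h satisfies the control condition: there exist K, γ₀ > 0 such that |d·h'(c·d)| ≤ K(h(d)+1) for all d > 0 and all c with |c−1| ≤ γ₀. Let r be a minimizer of Î over 𝒜_λ. Then r ∈ C¹((0,1]), r'(R) > 0 for all R ∈ (0,1], the map R ↦ R^{n−1} Φ̂_{,1}(r(R)) is C¹ on (0,1], and r satisfies the modified equilibrium equation (d/dR)[R^{n−1} Φ̂_{,1}(r(R))] = (n−1) R^{n−2} Φ̂_{,2}(r(R)) on (0,1). Moreover, if r(0) > 0, then the modified radial Cauchy stress satisfies lim_{R→0⁺} T̂(r(R)) = 0. -/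

import Mathlib

open Real MeasureTheory Filter Set
open scoped ENNReal NNReal

noncomputable section

/-- Radial stored energy `Φ(q, v, …, v) = (κ/n)(qⁿ + (n−1)vⁿ) + h(q v^{n−1})`,
the restriction of `Φ(v₁,…,vₙ) = (κ/n)(v₁ⁿ+⋯+vₙⁿ) + h(v₁⋯vₙ)` to points
`(q, v, …, v)`. -/
def Phi (n : ℕ) (κ : ℝ) (h : ℝ → ℝ) (q v : ℝ) : ℝ :=
  (κ / n) * (q ^ n + ((n : ℝ) - 1) * v ^ n) + h (q * v ^ (n - 1))

/-- `Φ_{,1}(q, v, …, v) = κ q^{n−1} + v^{n−1} h'(q v^{n−1})`. -/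
def Phi1 (n : ℕ) (κ : ℝ) (h' : ℝ → ℝ) (q v : ℝ) : ℝ :=
  κ * q ^ (n - 1) + v ^ (n - 1) * h' (q * v ^ (n - 1))

/-- `Φ_{,2}(q, v, …, v) = κ v^{n−1} + q v^{n−2} h'(q v^{n−1})`. -/
def Phi2 (n : ℕ) (κ : ℝ) (h' : ℝ → ℝ) (q v : ℝ) : ℝ :=
  κ * v ^ (n - 1) + q * v ^ (n - 2) * h' (q * v ^ (n - 1))

/-- Radial Cauchy stress `T(q,v) = v^{1−n} Φ_{,1}(q,v,…,v) = κ(q/v)^{n−1} + h'(q v^{n−1})`. -/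
def Tstress (n : ℕ) (κ : ℝ) (h' : ℝ → ℝ) (q v : ℝ) : ℝ :=
  κ * (q / v) ^ (n - 1) + h' (q * v ^ (n - 1))

/-- The determinant function `δ(R) = r'(R) (r(R)/R)^{n−1}`. -/
def del (n : ℕ) (r r' : ℝ → ℝ) (R : ℝ) : ℝ :=
  r' R * (r R / R) ^ (n - 1)

/-- Hypotheses on `h : (0,∞) → [0,∞)`: it is `C²` with derivative `h'` and second
derivative `h''`, `h'' > 0`, `h(d) → ∞` as `d → 0⁺`, `h(d)/d → ∞` as `d → ∞`,
`h'(d) → −∞` as `d → 0⁺` and `h'(d) → ∞` as `d → ∞`. -/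
structure GoodH (h h' h'' : ℝ → ℝ) : Prop where
  nonneg : ∀ d : ℝ, 0 < d → 0 ≤ h d
  deriv1 : ∀ d : ℝ, 0 < d → HasDerivAt h (h' d) d
  deriv2 : ∀ d : ℝ, 0 < d → HasDerivAt h' (h'' d) d
  cont2 : ContinuousOn h'' (Set.Ioi 0)
  hpp_pos : ∀ d : ℝ, 0 < d → 0 < h'' d
  lim_zero : Tendsto h (nhdsWithin 0 (Set.Ioi 0)) atTop
  lim_growth : Tendsto (fun d => h d / d) atTop atTop
  dlim_zero : Tendsto h' (nhdsWithin 0 (Set.Ioi 0)) atBot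
  dlim_top : Tendsto h' atTop atTop

/-- `r ∈ C²((0,1])`, with `r, r' > 0` on `(0,1]`, solving the radial equilibrium
equation `(d/dR)[R^{n−1} Φ_{,1}(r(R))] = (n−1) R^{n−2} Φ_{,2}(r(R))`. -/
structure RadialSol (n : ℕ) (κ : ℝ) (h' : ℝ → ℝ) (r r' r'' : ℝ → ℝ) : Prop where
  pos : ∀ R ∈ Set.Ioc (0:ℝ) 1, 0 < r R
  derivPos : ∀ R ∈ Set.Ioc (0:ℝ) 1, 0 < r' R
  hasDeriv : ∀ R ∈ Set.Ioc (0:ℝ) 1, HasDerivWithinAt r (r' R) (Set.Ioc 0 1) R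
  hasDeriv2 : ∀ R ∈ Set.Ioc (0:ℝ) 1, HasDerivWithinAt r' (r'' R) (Set.Ioc 0 1) R
  cont2 : ContinuousOn r'' (Set.Ioc 0 1)
  equil : ∀ R ∈ Set.Ioc (0:ℝ) 1,
    HasDerivWithinAt (fun s => s ^ (n - 1) * Phi1 n κ h' (r' s) (r s / s))
      (((n : ℝ) - 1) * R ^ (n - 2) * Phi2 n κ h' (r' R) (r R / R)) (Set.Ioc 0 1) R


/-- Modified radial stored energy
`Φ̂(q,v,…,v) = (κ/n)qⁿ + h(q v^{n−1}) + κ q v^{n−1}((n−1)/n + ln(v^{n−1}))`. -/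
def PhiHat (n : ℕ) (κ : ℝ) (h : ℝ → ℝ) (q v : ℝ) : ℝ :=
  (κ / n) * q ^ n + h (q * v ^ (n - 1)) +
    κ * (q * v ^ (n - 1)) * (((n : ℝ) - 1) / n + ((n : ℝ) - 1) * Real.log v)

/-- `Φ̂_{,1}(q,v,…,v) = κ q^{n−1} + v^{n−1} h'(q v^{n−1}) + κ v^{n−1}((n−1)/n + (n−1) ln v)`. -/
def PhiHat1 (n : ℕ) (κ : ℝ) (h' : ℝ → ℝ) (q v : ℝ) : ℝ :=
  κ * q ^ (n - 1) + v ^ (n - 1) * h' (q * v ^ (n - 1)) +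
    κ * v ^ (n - 1) * (((n : ℝ) - 1) / n + ((n : ℝ) - 1) * Real.log v)

/-- `Φ̂_{,2}(q,v,…,v) = q v^{n−2}(h'(q v^{n−1}) + κ + κ(n−1)(1/n + ln v))`. -/
def PhiHat2 (n : ℕ) (κ : ℝ) (h' : ℝ → ℝ) (q v : ℝ) : ℝ :=
  q * v ^ (n - 2) *
    (h' (q * v ^ (n - 1)) + κ + κ * (((n : ℝ) - 1) * (1 / n + Real.log v)))

/-- Modified radial Cauchy stress
`T̂(q,v) = κ(q/v)^{n−1} + h'(q v^{n−1}) + (n−1)κ(1/n + ln v)`. -/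
def THat (n : ℕ) (κ : ℝ) (h' : ℝ → ℝ) (q v : ℝ) : ℝ :=
  κ * (q / v) ^ (n - 1) + h' (q * v ^ (n - 1)) +
    ((n : ℝ) - 1) * κ * (1 / n + Real.log v)

/-- `r ∈ C²((0,1])`, with `r, r' > 0` on `(0,1]`, solving the modified radial
equilibrium equation `(d/dR)[R^{n−1} Φ̂_{,1}(r(R))] = (n−1) R^{n−2} Φ̂_{,2}(r(R))`. -/
structure ModRadialSol (n : ℕ) (κ : ℝ) (h' : ℝ → ℝ) (r r' r'' : ℝ → ℝ) : Prop where
  pos : ∀ R ∈ Set.Ioc (0:ℝ) 1, 0 < r R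
  derivPos : ∀ R ∈ Set.Ioc (0:ℝ) 1, 0 < r' R
  hasDeriv : ∀ R ∈ Set.Ioc (0:ℝ) 1, HasDerivWithinAt r (r' R) (Set.Ioc 0 1) R
  hasDeriv2 : ∀ R ∈ Set.Ioc (0:ℝ) 1, HasDerivWithinAt r' (r'' R) (Set.Ioc 0 1) R
  cont2 : ContinuousOn r'' (Set.Ioc 0 1)
  equil : ∀ R ∈ Set.Ioc (0:ℝ) 1,
    HasDerivWithinAt (fun s => s ^ (n - 1) * PhiHat1 n κ h' (r' s) (r s / s))
      (((n : ℝ) - 1) * R ^ (n - 2) * PhiHat2 n κ h' (r' R) (r R / R)) (Set.Ioc 0 1) R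


/-- The admissible set `𝒜_λ`: `r ∈ W^{1,1}(0,1)` (absolutely continuous with
integrable derivative `r'`), `r(1) = λ`, `r' > 0` a.e. in `(0,1)` and `r(0) ≥ 0`. -/
structure Adm (lam : ℝ) (r r' : ℝ → ℝ) : Prop where
  intg : IntegrableOn r' (Set.Ioc 0 1)
  ftc : ∀ R ∈ Set.Icc (0:ℝ) 1, r R = r 0 + ∫ t in Set.Ioc 0 R, r' t
  derivPos : ∀ᵐ R ∂(volume.restrict (Set.Ioc (0:ℝ) 1)), 0 < r' R
  bc : r 1 = lam
  c0 : 0 ≤ r 0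

/-- The modified energy functional `Î`, valued in `EReal` (it is the integral of
`R^{n−1} Φ̂(r'(R), r(R)/R, …, r(R)/R)` minus `(κ(n−1)/n) λⁿ ln λ`, the integral being
defined as the difference of the lower integrals of the positive and negative parts). -/
def IHatE (n : ℕ) (κ lam : ℝ) (h : ℝ → ℝ) (r r' : ℝ → ℝ) : EReal :=
  (((∫⁻ R in Set.Ioc (0:ℝ) 1,
      ENNReal.ofReal (R ^ (n - 1) * PhiHat n κ h (r' R) (r R / R))) : ℝ≥0∞) : EReal)
  - (((∫⁻ R in Set.Ioc (0:ℝ) 1,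
      ENNReal.ofReal (-(R ^ (n - 1) * PhiHat n κ h (r' R) (r R / R)))) : ℝ≥0∞) : EReal)
  - ((κ * ((n : ℝ) - 1) / n * lam ^ n * Real.log lam : ℝ) : EReal)


/-!
The admissible deformations near a minimizer `r` are the `r + tφ` with `φ(1) = 0` and `|φ'| ≤ r'`,
`|φ| ≤ r`: such a relative variation keeps `r + tφ` increasing, whatever the regularity of `r`.
The control condition bounds the first variation along it by the energy density of `r`, so that
dominated convergence gives the weak equilibrium equation `∫ (P φ' + Q φ) = 0`, where
`P = R^(n-1) Φ̂_{,1}` and `Q = (n-1) R^(n-2) Φ̂_{,2}`. The lemma of du Bois-Reymond, with test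
functions dominated by `r'`, turns it into `P(R) = C - ∫_R^1 Q` almost everywhere. As
`q ↦ Φ̂_{,1}(q, v, …, v)` is an increasing bijection from `(0, ∞)` to `ℝ`, this determines `r'`
almost everywhere as a continuous function, and `r` solves the equation in the classical sense.

If `r(0) > 0`, the variation `φ = c (r - λ)`, which moves the cavity, is relative too for small `c`,
and testing with it gives `C = ∫_0^1 Q`. Hence `r(R)^(n-1) T̂(r(R)) = P(R) = ∫_0^R Q → 0`.
-/

section ExtendedIntegral

variable {α : Type*} [MeasurableSpace α] {μ : Measure α} {f g : α → ℝ}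

/-- The extended integral `∫ f⁺ - ∫ f⁻`, the sense in which `IHatE` integrates the energy
density. When both parts are infinite its value is `⊤ - ⊤ = ⊥`. -/
def eintegral (μ : Measure α) (f : α → ℝ) : EReal :=
  ((∫⁻ x, ENNReal.ofReal (f x) ∂μ : ℝ≥0∞) : EReal)
    - ((∫⁻ x, ENNReal.ofReal (-f x) ∂μ : ℝ≥0∞) : EReal)

theorem eintegral_eq_coe_integral (hf : Integrable f μ) :
    eintegral μ f = ((∫ x, f x ∂μ : ℝ) : EReal) := by
  have hneg : ∫⁻ x, ENNReal.ofReal (-f x) ∂μ ≠ ∞ := hf.neg.lintegral_lt_top.ne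
  rw [integral_eq_lintegral_pos_part_sub_lintegral_neg_part hf, EReal.coe_sub,
    EReal.coe_ennreal_toReal hf.lintegral_lt_top.ne,
    EReal.coe_ennreal_toReal hneg, eintegral]

theorem integrable_of_eintegral_ne_top (hf : AEMeasurable f μ) (hg : Integrable g μ)
    (hgf : ∀ᵐ x ∂μ, -g x ≤ f x) (htop : eintegral μ f ≠ ⊤) : Integrable f μ := by
  have hneg : ∫⁻ x, ENNReal.ofReal (-f x) ∂μ ≠ ∞ := by
    refine ne_top_of_le_ne_top hg.lintegral_lt_top.ne (lintegral_mono_ae ?_)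
    filter_upwards [hgf] with x hx using ENNReal.ofReal_le_ofReal (by linarith)
  have hpos : ∫⁻ x, ENNReal.ofReal (f x) ∂μ ≠ ∞ := by
    intro h
    rw [eintegral, h, ← EReal.coe_ennreal_toReal hneg, EReal.coe_ennreal_top,
      EReal.top_sub_coe] at htop
    exact htop rfl
  refine ⟨hf.aestronglyMeasurable, (hasFiniteIntegral_iff_norm f).2 ?_⟩
  calc ∫⁻ x, ENNReal.ofReal ‖f x‖ ∂μ
      ≤ ∫⁻ x, (ENNReal.ofReal (f x) + ENNReal.ofReal (-f x)) ∂μ := lintegral_mono fun x => by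
        rcases le_total 0 (f x) with h0 | h0
        · simpa only [Real.norm_of_nonneg h0] using le_self_add
        · simpa only [Real.norm_of_nonpos h0] using le_add_self
    _ < ∞ := by
        rw [lintegral_add_left' hf.ennreal_ofReal]
        exact ENNReal.add_lt_top.2 ⟨hpos.lt_top, hneg.lt_top⟩

end ExtendedIntegral

theorem aemeasurable_comp_of_continuousOn {α β γ : Type*} [MeasurableSpace α] {μ : Measure α}
    [TopologicalSpace β] [MeasurableSpace β] [OpensMeasurableSpace β] [TopologicalSpace γ]
    [MeasurableSpace γ] [BorelSpace γ] {f : β → γ} {g : α → β} {s : Set β} (hf : ContinuousOn f s)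
    (hs : MeasurableSet s) (hg : AEMeasurable g μ) (hgs : ∀ᵐ x ∂μ, g x ∈ s) :
    AEMeasurable (fun x => f (g x)) μ := by
  have hmap : ∀ᵐ y ∂μ.map g, y ∈ s := (ae_map_iff hg hs).2 hgs
  have := hf.aemeasurable (μ := μ.map g) hs
  rw [Measure.restrict_eq_self_of_ae_mem hmap] at this
  exact this.comp_aemeasurable hg

section PrimitiveSwap

variable {Q η : ℝ → ℝ} {a b : ℝ}

theorem setIntegral_indicator_Iic_eq (f : ℝ → ℝ) {x : ℝ} (hx : x ∈ Ioc a b) :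
    ∫ t in Ioc a b, (Iic x).indicator f t = ∫ t in a..x, f t := by
  rw [setIntegral_indicator measurableSet_Iic, Ioc_inter_Iic, min_eq_right hx.2,
    intervalIntegral.integral_of_le hx.1.le]

theorem setIntegral_indicator_Ici_eq (f : ℝ → ℝ) {x : ℝ} (hx : x ∈ Ioc a b) :
    ∫ t in Ioc a b, (Ici x).indicator f t = ∫ t in x..b, f t := by
  have hset : Ioc a b ∩ Ici x = Icc x b := by
    ext t
    simp only [mem_inter_iff, mem_Ioc, mem_Ici, mem_Icc]
    exact ⟨fun h => ⟨h.2, h.1.2⟩, fun h => ⟨⟨hx.1.trans_le h.1, h.2⟩, h.1⟩⟩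
  rw [setIntegral_indicator measurableSet_Ici, hset, integral_Icc_eq_integral_Ioc,
    intervalIntegral.integral_of_le hx.2]

theorem integrable_triangle_mul (hQ : AEStronglyMeasurable Q (volume.restrict (Ioc a b)))
    (hη : IntegrableOn η (Ioc a b))
    (hQη : IntegrableOn (fun x => Q x * ∫ t in a..x, |η t|) (Ioc a b)) :
    Integrable (Function.uncurry fun x => (Iic x).indicator fun t => Q x * η t)
      ((volume.restrict (Ioc a b)).prod (volume.restrict (Ioc a b))) := by
  have hmeas : AEStronglyMeasurable (Function.uncurry fun x => (Iic x).indicator fun t => Q x * η t)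
      ((volume.restrict (Ioc a b)).prod (volume.restrict (Ioc a b))) :=
    (hQ.comp_fst.mul hη.1.comp_snd).indicator (measurableSet_le measurable_snd measurable_fst)
  refine (integrable_prod_iff hmeas).2 ⟨.of_forall fun x =>
    (hη.const_mul (Q x)).indicator measurableSet_Iic, hQη.norm.congr ?_⟩
  filter_upwards [ae_restrict_mem measurableSet_Ioc] with x hx
  have hη_nonneg : 0 ≤ ∫ t in a..x, |η t| :=
    intervalIntegral.integral_nonneg hx.1.le fun t _ => abs_nonneg _
  simp only [Function.uncurry_apply_pair, norm_indicator_eq_indicator_norm, norm_mul]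
  rw [setIntegral_indicator_Iic_eq _ hx, intervalIntegral.integral_const_mul,
    Real.norm_of_nonneg hη_nonneg]
  rfl

theorem integral_mul_tail_eq (hQ : AEStronglyMeasurable Q (volume.restrict (Ioc a b)))
    (hη : IntegrableOn η (Ioc a b))
    (hQη : IntegrableOn (fun x => Q x * ∫ t in a..x, |η t|) (Ioc a b)) :
    IntegrableOn (fun t => (∫ x in t..b, Q x) * η t) (Ioc a b) ∧
      ∫ t in Ioc a b, (∫ x in t..b, Q x) * η t = ∫ x in Ioc a b, Q x * ∫ t in a..x, η t := by
  have hint := integrable_triangle_mul hQ hη hQη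
  have hcol : ∀ t ∈ Ioc a b, ∫ x in Ioc a b, (Iic x).indicator (fun t => Q x * η t) t
      = (∫ x in t..b, Q x) * η t := fun t ht => by
    rw [← intervalIntegral.integral_mul_const, ← setIntegral_indicator_Ici_eq _ ht]
    rfl
  refine ⟨IntegrableOn.congr_fun hint.integral_prod_right hcol measurableSet_Ioc, ?_⟩
  rw [← setIntegral_congr_fun measurableSet_Ioc hcol, ← integral_integral_swap hint]
  refine setIntegral_congr_fun measurableSet_Ioc fun x hx => ?_
  simp only [setIntegral_indicator_Iic_eq _ hx, intervalIntegral.integral_const_mul]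

end PrimitiveSwap

section DuBoisReymond

variable {α : Type*} [MeasurableSpace α] {μ : Measure α} {F p : α → ℝ}

theorem integral_pos_of_ae_pos (hμ : μ ≠ 0) (hp : Integrable p μ) (hp_pos : ∀ᵐ x ∂μ, 0 < p x) :
    0 < ∫ x, p x ∂μ := by
  have hsupp : Function.support p =ᵐ[μ] univ :=
    eventuallyEq_univ.2 (hp_pos.mono fun x hx => hx.ne')
  rw [integral_pos_iff_support_of_nonneg_ae (hp_pos.mono fun x hx => hx.le) hp,
    measure_congr hsupp]
  exact Measure.measure_univ_pos.2 hμ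

theorem setIntegral_sub_mean_mul_eq_zero (hp : Integrable p μ) (hp_nonneg : 0 ≤ᵐ[μ] p)
    (hp_int : 0 < ∫ x, p x ∂μ) (hFp : Integrable (fun x => F x * p x) μ)
    (hF : ∀ η : α → ℝ, Integrable η μ → (∀ᵐ x ∂μ, |η x| ≤ p x) → ∫ x, η x ∂μ = 0 →
      ∫ x, F x * η x ∂μ = 0) {A : Set α} (hA : MeasurableSet A) :
    ∫ x in A, (F x * p x - ((∫ x, F x * p x ∂μ) / ∫ x, p x ∂μ) * p x) ∂μ = 0 := by
  set c := (∫ x in A, p x ∂μ) / ∫ x, p x ∂μ with hc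
  have hc_nonneg : 0 ≤ c := div_nonneg (setIntegral_nonneg_of_ae hp_nonneg) hp_int.le
  have hc_le : c ≤ 1 := (div_le_one hp_int).2 (setIntegral_le_integral hp hp_nonneg)
  have hη_le : ∀ᵐ x ∂μ, |A.indicator p x - c * p x| ≤ p x := by
    filter_upwards [hp_nonneg] with x hx
    have hx : 0 ≤ p x := hx
    by_cases hxA : x ∈ A
    · rw [indicator_of_mem hxA, abs_le]
      constructor <;> nlinarith
    · rw [indicator_of_notMem hxA, abs_le]
      constructor <;> nlinarith
  have hη_mean : ∫ x, (A.indicator p x - c * p x) ∂μ = 0 := by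
    rw [integral_sub (hp.indicator hA) (hp.const_mul c), integral_indicator hA,
      integral_const_mul, hc, div_mul_cancel₀ _ hp_int.ne', sub_self]
  have hFη : ∀ x, F x * (A.indicator p x - c * p x)
      = A.indicator (fun x => F x * p x) x - c * (F x * p x) := fun x => by
    by_cases hxA : x ∈ A
    · simp only [indicator_of_mem hxA]; ring
    · simp only [indicator_of_notMem hxA]; ring
  have hzero := hF _ ((hp.indicator hA).sub (hp.const_mul c)) hη_le hη_mean
  simp only [Pi.sub_apply, hFη] at hzero
  rw [integral_sub (hFp.indicator hA) (hFp.const_mul c), integral_indicator hA,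
    integral_const_mul] at hzero
  rw [integral_sub hFp.integrableOn (hp.const_mul _).integrableOn, integral_const_mul, ← hzero, hc]
  ring

theorem exists_ae_eq_const_of_integral_mul_eq_zero (hp : Integrable p μ)
    (hp_pos : ∀ᵐ x ∂μ, 0 < p x) (hFp : Integrable (fun x => F x * p x) μ)
    (hF : ∀ η : α → ℝ, Integrable η μ → (∀ᵐ x ∂μ, |η x| ≤ p x) → ∫ x, η x ∂μ = 0 →
      ∫ x, F x * η x ∂μ = 0) :
    ∃ C : ℝ, F =ᵐ[μ] fun _ => C := by
  rcases eq_or_ne μ 0 with rfl | hμ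
  · exact ⟨0, by simp only [ae_zero, EventuallyEq, eventually_bot]⟩
  have hp_nonneg : 0 ≤ᵐ[μ] p := hp_pos.mono fun x hx => hx.le
  have hp_int : 0 < ∫ x, p x ∂μ := integral_pos_of_ae_pos hμ hp hp_pos
  refine ⟨(∫ x, F x * p x ∂μ) / ∫ x, p x ∂μ, ?_⟩
  have hzero := (hFp.sub (hp.const_mul _)).ae_eq_zero_of_forall_setIntegral_eq_zero
    fun A hA _ => setIntegral_sub_mean_mul_eq_zero hp hp_nonneg hp_int hFp hF hA
  filter_upwards [hzero, hp_pos] with x hx hpx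
  exact mul_right_cancel₀ hpx.ne' (sub_eq_zero.1 hx)

end DuBoisReymond

section FirstVariation

variable {α : Type*} [MeasurableSpace α] {μ : Measure α}

theorem integral_deriv_eq_zero_of_isMin {F F' : ℝ → α → ℝ} {bound : α → ℝ} {ε : ℝ} (hε : 0 < ε)
    (hF : ∀ t ∈ Metric.ball (0 : ℝ) ε, AEStronglyMeasurable (F t) μ) (hF0 : Integrable (F 0) μ)
    (hF' : AEStronglyMeasurable (F' 0) μ)
    (hle : ∀ᵐ a ∂μ, ∀ t ∈ Metric.ball (0 : ℝ) ε, ‖F' t a‖ ≤ bound a) (hbound : Integrable bound μ)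
    (hd : ∀ᵐ a ∂μ, ∀ t ∈ Metric.ball (0 : ℝ) ε, HasDerivAt (F · a) (F' t a) t)
    (hmin : ∀ t ∈ Metric.ball (0 : ℝ) ε, Integrable (F t) μ → ∫ a, F 0 a ∂μ ≤ ∫ a, F t a ∂μ) :
    ∫ a, F' 0 a ∂μ = 0 := by
  have hball : Metric.ball (0 : ℝ) ε ∈ nhds 0 := Metric.ball_mem_nhds 0 hε
  have hderiv := (hasDerivAt_integral_of_dominated_loc_of_deriv_le hball
    (by filter_upwards [hball] using hF) hF0 hF' hle hbound hd).2
  have hint : ∀ t ∈ Metric.ball (0 : ℝ) ε, Integrable (F t) μ := by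
    intro t ht
    have hsub : Integrable (F t - F 0) μ := by
      refine (hbound.mul_const ‖t‖).mono' ((hF t ht).sub hF0.1) ?_
      filter_upwards [hle, hd] with a hle_a hd_a
      simpa only [sub_zero, Pi.sub_apply] using
        (convex_ball (0 : ℝ) ε).norm_image_sub_le_of_norm_hasDerivWithin_le
          (fun x hx => (hd_a x hx).hasDerivWithinAt) hle_a (Metric.mem_ball_self hε) ht
    simpa only [sub_add_cancel] using hsub.add hF0
  refine IsLocalMin.hasDerivAt_eq_zero ?_ hderiv
  filter_upwards [hball] with t ht using hmin t ht (hint t ht)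

theorem integral_firstVariation_eq_zero {L L₁ L₂ : α → ℝ → ℝ → ℝ} {p u η φ bound : α → ℝ} {τ : ℝ}
    (hτ : 0 < τ) (hη : ∀ᵐ x ∂μ, |η x| ≤ p x) (hφ : ∀ᵐ x ∂μ, |φ x| ≤ u x)
    (hL : ∀ t, |t| < τ → AEStronglyMeasurable (fun x => L x (p x + t * η x) (u x + t * φ x)) μ)
    (hL_int : Integrable (fun x => L x (p x) (u x)) μ)
    (hL' : AEStronglyMeasurable
      (fun x => L₁ x (p x) (u x) * η x + L₂ x (p x) (u x) * φ x) μ)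
    (hd : ∀ᵐ x ∂μ, ∀ q v, |q - p x| ≤ τ * p x → |v - u x| ≤ τ * u x →
      HasFDerivAt (fun z : ℝ × ℝ => L x z.1 z.2) (L₁ x q v • ContinuousLinearMap.fst ℝ ℝ ℝ
        + L₂ x q v • ContinuousLinearMap.snd ℝ ℝ ℝ) (q, v))
    (hle : ∀ᵐ x ∂μ, ∀ q v, |q - p x| ≤ τ * p x → |v - u x| ≤ τ * u x →
      |L₁ x q v| * p x + |L₂ x q v| * u x ≤ bound x)
    (hbound : Integrable bound μ)
    (hmin : ∀ t, |t| < τ → Integrable (fun x => L x (p x + t * η x) (u x + t * φ x)) μ →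
      ∫ x, L x (p x) (u x) ∂μ ≤ ∫ x, L x (p x + t * η x) (u x + t * φ x) ∂μ) :
    ∫ x, (L₁ x (p x) (u x) * η x + L₂ x (p x) (u x) * φ x) ∂μ = 0 := by
  have hball : ∀ t, t ∈ Metric.ball (0 : ℝ) τ ↔ |t| < τ := fun t => by simp
  have hclose : ∀ {t a b : ℝ}, t ∈ Metric.ball (0 : ℝ) τ → |a| ≤ b → |b + t * a - b| ≤ τ * b :=
    fun {t a b} ht hab => by
      rw [add_sub_cancel_left, abs_mul]
      exact mul_le_mul ((hball t).1 ht).le hab (abs_nonneg a) hτ.le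
  have hzero := integral_deriv_eq_zero_of_isMin (μ := μ) (bound := bound)
    (F := fun t x => L x (p x + t * η x) (u x + t * φ x))
    (F' := fun t x => L₁ x (p x + t * η x) (u x + t * φ x) * η x
      + L₂ x (p x + t * η x) (u x + t * φ x) * φ x) hτ
    (fun t ht => hL t ((hball t).1 ht)) (by simpa only [zero_mul, add_zero])
    (by simpa only [zero_mul, add_zero]) ?_ hbound ?_ ?_
  · simpa only [zero_mul, add_zero] using hzero
  · filter_upwards [hη, hφ, hle] with x hηx hφx hle_x t ht
    refine (norm_add_le _ _).trans (le_trans ?_ (hle_x _ _ (hclose ht hηx) (hclose ht hφx)))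
    simp only [norm_mul, Real.norm_eq_abs]
    gcongr
  · filter_upwards [hη, hφ, hd] with x hηx hφx hd_x t ht
    have hpath : HasDerivAt (fun t => (p x + t * η x, u x + t * φ x)) (η x, φ x) t :=
      ((hasDerivAt_mul_const (η x)).const_add (p x)).prodMk
        ((hasDerivAt_mul_const (φ x)).const_add (u x))
    exact (hd_x _ _ (hclose ht hηx) (hclose ht hφx)).comp_hasDerivAt t hpath
  · intro t ht
    simpa only [zero_mul, add_zero] using hmin t ((hball t).1 ht)

end FirstVariation

section Regularity

theorem continuousOn_of_strictMonoOn_of_apply_eq {X β γ : Type*} [TopologicalSpace X]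
    [TopologicalSpace β] [LinearOrder β] [OrderTopology β] [TopologicalSpace γ] [LinearOrder γ]
    [OrderClosedTopology γ] {G : β → X → γ} {H : X → γ} {ρ : X → β} {s : Set X} {b₀ : β}
    (hG : ∀ b, b₀ < b → ContinuousOn (G b) s) (hmono : ∀ x ∈ s, StrictMonoOn (G · x) (Ioi b₀))
    (hH : ContinuousOn H s) (hρ : ∀ x ∈ s, b₀ < ρ x) (heq : ∀ x ∈ s, G (ρ x) x = H x) :
    ContinuousOn ρ s := by
  intro x₀ hx₀
  refine tendsto_order.2 ⟨fun a ha => ?_, fun b hb => ?_⟩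
  · rcases le_or_gt a b₀ with ha₀ | ha₀
    · filter_upwards [self_mem_nhdsWithin] with x hx using ha₀.trans_lt (hρ x hx)
    · have hlt : G a x₀ < H x₀ := heq x₀ hx₀ ▸ hmono x₀ hx₀ ha₀ (hρ x₀ hx₀) ha
      filter_upwards [(hG a ha₀ x₀ hx₀).eventually_lt (hH x₀ hx₀) hlt, self_mem_nhdsWithin]
        with x hlt_x hx
      rw [← heq x hx] at hlt_x
      exact ((hmono x hx).lt_iff_lt ha₀ (hρ x hx)).1 hlt_x
  · have hb₀ : b₀ < b := (hρ x₀ hx₀).trans hb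
    have hlt : H x₀ < G b x₀ := heq x₀ hx₀ ▸ hmono x₀ hx₀ (hρ x₀ hx₀) hb₀ hb
    filter_upwards [(hH x₀ hx₀).eventually_lt (hG b hb₀ x₀ hx₀) hlt, self_mem_nhdsWithin]
      with x hlt_x hx
    rw [← heq x hx] at hlt_x
    exact ((hmono x hx).lt_iff_lt (hρ x hx) hb₀).1 hlt_x

theorem hasDerivWithinAt_of_eq_sub_integral {E : Type*} [NormedAddCommGroup E] [NormedSpace ℝ E]
    [CompleteSpace E] {f F : ℝ → E} {a b x : ℝ} {c : E} (hf : ContinuousOn f (Ioc a b))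
    (hF : ∀ x ∈ Ioc a b, F x = c - ∫ t in x..b, f t) (hx : x ∈ Ioc a b) :
    HasDerivWithinAt F (f x) (Ioc a b) x := by
  set g : ℝ → E := fun t => f (min t b) with hg
  have hgf : ∀ t ≤ b, g t = f t := fun t ht => by rw [hg]; simp only [min_eq_left ht]
  have hg_cont : ContinuousOn g (Ioi a) := hf.comp (continuous_id.min continuous_const).continuousOn
    fun t ht => ⟨lt_min ht (hx.1.trans_le hx.2), min_le_right _ _⟩
  have hg_int : IntervalIntegrable g volume x b :=
    (hg_cont.mono fun t ht => hx.1.trans_le ((uIcc_of_le hx.2 ▸ ht).1)).intervalIntegrable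
  have hderiv := (intervalIntegral.integral_hasDerivAt_left hg_int
    (hg_cont.stronglyMeasurableAtFilter isOpen_Ioi x hx.1)
    (hg_cont.continuousAt (Ioi_mem_nhds hx.1))).const_sub c
  rw [neg_neg, hgf x hx.2] at hderiv
  refine hderiv.hasDerivWithinAt.congr_of_mem (fun y hy => ?_) hx
  rw [hF y hy, intervalIntegral.integral_congr fun t ht => ?_]
  exact (hgf t (uIcc_of_le hy.2 ▸ ht).2).symm

theorem continuousOn_integral_left {E : Type*} [NormedAddCommGroup E] [NormedSpace ℝ E]
    {f : ℝ → E} {a b : ℝ} (hf : ∀ x ∈ Ioc a b, IntegrableOn f (Ioc x b)) :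
    ContinuousOn (fun x => ∫ t in x..b, f t) (Ioc a b) := by
  intro x hx
  obtain ⟨y, hay, hyx⟩ := exists_between hx.1
  have hy : y ∈ Ioc a b := ⟨hay, hyx.le.trans hx.2⟩
  have hint : IntegrableOn f (uIcc b y) := by
    rw [uIcc_of_ge hy.2, integrableOn_Icc_iff_integrableOn_Ioc]
    exact hf y hy
  have hcont : ContinuousOn (fun x => ∫ t in x..b, f t) (Icc y b) := by
    have := (intervalIntegral.continuousOn_primitive_interval hint).neg
    rw [uIcc_of_ge hy.2] at this
    exact this.congr fun x _ => intervalIntegral.integral_symm b x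
  exact (hcont x ⟨hyx.le, hx.2⟩).mono_of_mem_nhdsWithin
    (mem_of_superset (inter_mem_nhdsWithin _ (Ioi_mem_nhds hyx)) fun z hz => ⟨hz.2.le, hz.1.2⟩)

end Regularity

section StoredEnergy

/-- A nonnegative convex `C¹` volumetric energy `h` on `(0, ∞)`, with derivative `h'`, whose slope
tends to `-∞` at `0⁺`. -/
structure VolumetricEnergy (h h' : ℝ → ℝ) : Prop where
  nonneg : ∀ d, 0 < d → 0 ≤ h d
  hasDerivAt : ∀ d, 0 < d → HasDerivAt h (h' d) d
  continuousOn_deriv : ContinuousOn h' (Ioi 0)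
  monotoneOn_deriv : MonotoneOn h' (Ioi 0)
  tendsto_deriv_zero : Tendsto h' (nhdsWithin 0 (Ioi 0)) atBot

/-- The control condition on the derivative `h'` of the volumetric energy, with constant `K` and
radius `γ₀`: it keeps the first variation integrable along perturbations of a state of finite
energy. -/
def ControlCondition (h h' : ℝ → ℝ) (K γ₀ : ℝ) : Prop :=
  ∀ d : ℝ, 0 < d → ∀ c : ℝ, |c - 1| ≤ γ₀ → |d * h' (c * d)| ≤ K * (h d + 1)

/-- The terms of the modified stored energy `PhiHat n κ h`, without constants and signs: a positive
quantity which dominates the first variation and is dominated, up to the logarithm of small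
stretches, by the energy. -/
def energyControl (n : ℕ) (h : ℝ → ℝ) (q v : ℝ) : ℝ :=
  q ^ n + (h (q * v ^ (n - 1)) + 1) + q * v ^ (n - 1) + q * v ^ (n - 1) * |log v|

variable {n : ℕ} {κ K γ₀ : ℝ} {h h' h'' : ℝ → ℝ}

theorem GoodH.volumetricEnergy (hh : GoodH h h' h'') : VolumetricEnergy h h' where
  nonneg := hh.nonneg
  hasDerivAt := hh.deriv1
  continuousOn_deriv d hd := (hh.deriv2 d hd).continuousAt.continuousWithinAt
  monotoneOn_deriv := by
    refine (strictMonoOn_of_deriv_pos (convex_Ioi 0)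
      (fun d hd => (hh.deriv2 d hd).continuousAt.continuousWithinAt) fun d hd => ?_).monotoneOn
    rw [interior_Ioi] at hd
    exact (hh.deriv2 d hd).deriv ▸ hh.hpp_pos d hd
  tendsto_deriv_zero := hh.dlim_zero

theorem VolumetricEnergy.continuousOn (hh : VolumetricEnergy h h') : ContinuousOn h (Ioi 0) :=
  fun d hd => (hh.hasDerivAt d hd).continuousAt.continuousWithinAt

section Continuity

theorem continuousOn_comp_mul_pow (hh : ContinuousOn h (Ioi 0)) :
    ContinuousOn (fun z : ℝ × ℝ => h (z.1 * z.2 ^ (n - 1))) (Ioi 0 ×ˢ Ioi 0) :=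
  hh.comp (by fun_prop) fun _ hz => mem_Ioi.2 (mul_pos hz.1 (pow_pos hz.2 _))

theorem continuousOn_log_snd :
    ContinuousOn (fun z : ℝ × ℝ => log z.2) (Ioi 0 ×ˢ Ioi 0) :=
  continuousOn_snd.log fun _ hz => ne_of_gt hz.2

theorem continuousOn_PhiHat (hh : ContinuousOn h (Ioi 0)) :
    ContinuousOn (fun z : ℝ × ℝ => PhiHat n κ h z.1 z.2) (Ioi 0 ×ˢ Ioi 0) :=
  (((continuousOn_fst.pow n).const_mul _).add (continuousOn_comp_mul_pow hh)).add
    (((continuousOn_fst.mul (continuousOn_snd.pow _)).const_mul κ).mul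
      ((continuousOn_log_snd.const_mul _).const_add _))

theorem continuousOn_PhiHat1 (hh : ContinuousOn h' (Ioi 0)) :
    ContinuousOn (fun z : ℝ × ℝ => PhiHat1 n κ h' z.1 z.2) (Ioi 0 ×ˢ Ioi 0) :=
  (((continuousOn_fst.pow _).const_mul κ).add
    ((continuousOn_snd.pow _).mul (continuousOn_comp_mul_pow hh))).add
      (((continuousOn_snd.pow _).const_mul κ).mul
        ((continuousOn_log_snd.const_mul _).const_add _))

theorem continuousOn_PhiHat2 (hh : ContinuousOn h' (Ioi 0)) :
    ContinuousOn (fun z : ℝ × ℝ => PhiHat2 n κ h' z.1 z.2) (Ioi 0 ×ˢ Ioi 0) :=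
  (continuousOn_fst.mul (continuousOn_snd.pow _)).mul
    (((continuousOn_comp_mul_pow hh).add_const κ).add
      (((continuousOn_log_snd.const_add _).const_mul _).const_mul κ))

theorem continuousOn_energyControl (hh : ContinuousOn h (Ioi 0)) :
    ContinuousOn (fun z : ℝ × ℝ => energyControl n h z.1 z.2) (Ioi 0 ×ˢ Ioi 0) :=
  have hvol := continuousOn_fst.mul (continuousOn_snd.pow (n - 1))
  (((continuousOn_fst.pow n).add ((continuousOn_comp_mul_pow hh).add_const 1)).add hvol).add
    (hvol.mul continuousOn_log_snd.abs)

end Continuity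

theorem hasFDerivAt_mul_pow (k : ℕ) (q v : ℝ) :
    HasFDerivAt (fun z : ℝ × ℝ => z.1 * z.2 ^ k)
      (v ^ k • ContinuousLinearMap.fst ℝ ℝ ℝ
        + (k * q * v ^ (k - 1)) • ContinuousLinearMap.snd ℝ ℝ ℝ) (q, v) := by
  refine ((hasFDerivAt_fst (𝕜 := ℝ) (p := (q, v))).mul
    ((hasFDerivAt_snd (𝕜 := ℝ) (p := (q, v))).pow k)).congr_fderiv ?_
  refine ContinuousLinearMap.ext fun z => ?_
  simp only [add_apply, smul_apply, ContinuousLinearMap.coe_fst', ContinuousLinearMap.coe_snd',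
    smul_eq_mul, nsmul_eq_mul]
  ring

theorem hasFDerivAt_PhiHat (hn : 2 ≤ n) {q v : ℝ} (hv : 0 < v)
    (hh : HasDerivAt h (h' (q * v ^ (n - 1))) (q * v ^ (n - 1))) :
    HasFDerivAt (fun z : ℝ × ℝ => PhiHat n κ h z.1 z.2)
      (PhiHat1 n κ h' q v • ContinuousLinearMap.fst ℝ ℝ ℝ
        + (((n : ℝ) - 1) * PhiHat2 n κ h' q v) • ContinuousLinearMap.snd ℝ ℝ ℝ) (q, v) := by
  have hvol := hasFDerivAt_mul_pow (n - 1) q v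
  have hpow := (hasFDerivAt_fst (𝕜 := ℝ) (p := (q, v))).pow n
  have hlog := (hasFDerivAt_snd (𝕜 := ℝ) (p := (q, v))).log hv.ne'
  refine (((hpow.const_mul (κ / n)).add (hh.comp_hasFDerivAt (q, v) hvol)).add
    ((hvol.const_mul κ).mul
      ((hlog.const_mul ((n : ℝ) - 1)).const_add (((n : ℝ) - 1) / n)))).congr_fderiv ?_
  obtain ⟨m, rfl⟩ := Nat.exists_eq_add_of_le' hn
  have hm : (m : ℝ) + 2 ≠ 0 := by positivity
  refine ContinuousLinearMap.ext fun z => ?_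
  simp only [PhiHat1, PhiHat2, add_apply, smul_apply, ContinuousLinearMap.coe_fst',
    ContinuousLinearMap.coe_snd', smul_eq_mul, nsmul_eq_mul, Nat.add_one_sub_one,
    Nat.add_sub_cancel, Nat.cast_add, Nat.cast_ofNat, Nat.cast_one]
  field_simp
  ring

section Perturbation

theorem pow_sub_two_mul {M : Type*} [Monoid M] (hn : 2 ≤ n) (a : M) :
    a ^ (n - 2) * a = a ^ (n - 1) := by
  rw [← pow_succ]
  congr 1
  lia

theorem exists_perturbation_radius (n : ℕ) (hγ₀ : 0 < γ₀) : ∃ τ > 0, τ ≤ 1 / 2 ∧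
    ∀ x y : ℝ, |x - 1| ≤ τ → |y - 1| ≤ τ → |x * y ^ (n - 1) - 1| ≤ γ₀ := by
  have hcont : ContinuousAt (fun z : ℝ × ℝ => z.1 * z.2 ^ (n - 1)) (1, 1) := by fun_prop
  obtain ⟨δ, hδ, hball⟩ := Metric.continuousAt_iff.1 hcont γ₀ hγ₀
  have hτ : min (δ / 2) (1 / 2) < δ := (min_le_left _ _).trans_lt (half_lt_self hδ)
  refine ⟨min (δ / 2) (1 / 2), by positivity, min_le_right _ _, fun x y hx hy => ?_⟩
  have hdist : dist (x, y) (1, 1) < δ := max_lt (hx.trans_lt hτ) (hy.trans_lt hτ)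
  simpa only [one_pow, mul_one, Real.dist_eq] using (hball hdist).le

theorem abs_log_le_one_of_abs_sub_one_le {y : ℝ} (hy : |y - 1| ≤ 1 / 2) : |log y| ≤ 1 := by
  obtain ⟨hlow, hupp⟩ := abs_le.1 hy
  have hy_pos : 0 < y := by linarith
  have hinv : y⁻¹ ≤ 2 := inv_le_of_inv_le₀ two_pos (by linarith)
  exact abs_le.2 ⟨by linarith [one_sub_inv_le_log_of_pos hy_pos],
    by linarith [log_le_sub_one_of_pos hy_pos]⟩

theorem ControlCondition.nonneg (hctrl : ControlCondition h h' K γ₀)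
    (hh : ∀ d, 0 < d → 0 ≤ h d) (hγ₀ : 0 ≤ γ₀) : 0 ≤ K := by
  have hK := (abs_nonneg _).trans (hctrl 1 one_pos 1 (by rwa [sub_self, abs_zero]))
  exact nonneg_of_mul_nonneg_left hK (by linarith [hh 1 one_pos])

theorem PhiHat1_mul_eq (hn : n ≠ 0) (q v : ℝ) :
    PhiHat1 n κ h' q v * q = κ * q ^ n + (q * v ^ (n - 1) * h' (q * v ^ (n - 1))
      + κ * (q * v ^ (n - 1)) * (((n : ℝ) - 1) / n + ((n : ℝ) - 1) * log v)) := by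
  rw [PhiHat1, ← pow_sub_one_mul hn q]
  ring

theorem PhiHat2_mul_eq (hn : 2 ≤ n) (q v : ℝ) :
    PhiHat2 n κ h' q v * v = q * v ^ (n - 1) * h' (q * v ^ (n - 1))
      + κ * (q * v ^ (n - 1)) * (1 + ((n : ℝ) - 1) / n + ((n : ℝ) - 1) * log v) := by
  calc PhiHat2 n κ h' q v * v
      = q * (v ^ (n - 2) * v) *
        (h' (q * v ^ (n - 1)) + κ + κ * (((n : ℝ) - 1) * (1 / n + log v))) := by
        rw [PhiHat2]
        ring
    _ = _ := by
        rw [pow_sub_two_mul hn]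
        ring

variable {q v x y : ℝ}

theorem energyControl_nonneg (hh : ∀ d, 0 < d → 0 ≤ h d) (hq : 0 < q) (hv : 0 < v) :
    0 ≤ energyControl n h q v := by
  have hvol : 0 < q * v ^ (n - 1) := by positivity
  have := hh _ hvol
  unfold energyControl
  positivity

theorem ControlCondition.abs_mul_add_le (hctrl : ControlCondition h h' K γ₀)
    (hh : ∀ d, 0 < d → 0 ≤ h d) (hκ : 0 ≤ κ) (hn : n ≠ 0) {c d ℓ ℓ' a : ℝ} (hd : 0 < d)
    (hc : 0 ≤ c) (hcγ : |c - 1| ≤ γ₀) (ha : 0 ≤ a) (ha2 : a ≤ 2) (hℓ : |ℓ'| ≤ |ℓ| + 1) :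
    |c * d * h' (c * d) + κ * (c * d) * (a + ((n : ℝ) - 1) * ℓ')|
      ≤ c * ((K + κ * (n + 1)) * (h d + 1 + d + d * |ℓ|)) := by
  have hK : 0 ≤ K := hctrl.nonneg hh ((abs_nonneg _).trans hcγ)
  have hn1 : (1 : ℝ) ≤ n := Nat.one_le_cast.2 (Nat.one_le_iff_ne_zero.2 hn)
  have hlog : |a + ((n : ℝ) - 1) * ℓ'| ≤ (n + 1) * (1 + |ℓ|) := by
    calc |a + ((n : ℝ) - 1) * ℓ'| ≤ |a| + |((n : ℝ) - 1) * ℓ'| := abs_add_le _ _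
      _ = a + ((n : ℝ) - 1) * |ℓ'| := by
        rw [abs_of_nonneg ha, abs_mul, abs_of_nonneg (sub_nonneg.2 hn1)]
      _ ≤ (n + 1) * (1 + |ℓ|) := by nlinarith [abs_nonneg ℓ]
  calc |c * d * h' (c * d) + κ * (c * d) * (a + ((n : ℝ) - 1) * ℓ')|
      ≤ c * |d * h' (c * d)| + κ * (c * d) * |a + ((n : ℝ) - 1) * ℓ'| := by
        refine (abs_add_le _ _).trans_eq ?_
        rw [abs_mul (κ * (c * d)), abs_of_nonneg (by positivity : 0 ≤ κ * (c * d)), mul_assoc c,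
          abs_mul c, abs_of_nonneg hc]
    _ ≤ c * (K * (h d + 1)) + κ * (c * d) * ((n + 1) * (1 + |ℓ|)) := by
        gcongr
        exact hctrl d hd c hcγ
    _ = c * (K * (h d + 1) + κ * (n + 1) * (d + d * |ℓ|)) := by ring
    _ ≤ c * ((K + κ * (n + 1)) * (h d + 1 + d + d * |ℓ|)) := by
        have hmixed : 0 ≤ K * (d + d * |ℓ|) + κ * (n + 1) * (h d + 1) := by
          have := hh d hd
          positivity
        gcongr
        linarith

theorem ControlCondition.abs_mul_pow_add_le (hctrl : ControlCondition h h' K γ₀)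
    (hh : ∀ d, 0 < d → 0 ≤ h d) (hκ : 0 ≤ κ) (hn : n ≠ 0) (hq : 0 < q) (hv : 0 < v)
    (hx : |x - 1| ≤ 1 / 2) (hy : |y - 1| ≤ 1 / 2) (hxy : |x * y ^ (n - 1) - 1| ≤ γ₀) {a : ℝ}
    (ha : 0 ≤ a) (ha2 : a ≤ 2) :
    |x * q * (y * v) ^ (n - 1) * h' (x * q * (y * v) ^ (n - 1))
        + κ * (x * q * (y * v) ^ (n - 1)) * (a + ((n : ℝ) - 1) * log (y * v))|
      ≤ 2 ^ n * ((K + κ * (n + 1)) * (energyControl n h q v - q ^ n)) := by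
  have hK : 0 ≤ K := hctrl.nonneg hh ((abs_nonneg _).trans hxy)
  obtain ⟨hx_low, hx_upp⟩ := abs_le.1 hx
  obtain ⟨hy_low, hy_upp⟩ := abs_le.1 hy
  have hx_pos : 0 < x := by linarith
  have hy_pos : 0 < y := by linarith
  have hvol : 0 < q * v ^ (n - 1) := by positivity
  have hlog : |log (y * v)| ≤ |log v| + 1 := by
    rw [log_mul hy_pos.ne' hv.ne', add_comm (log y)]
    exact (abs_add_le _ _).trans (add_le_add_right (abs_log_le_one_of_abs_sub_one_le hy) _)
  have hxy_le : x * y ^ (n - 1) ≤ 2 ^ n := by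
    rw [← mul_pow_sub_one hn (2 : ℝ)]
    gcongr <;> linarith
  have hassoc : x * q * (y * v) ^ (n - 1) = x * y ^ (n - 1) * (q * v ^ (n - 1)) := by
    rw [mul_pow]
    ring
  have hE : energyControl n h q v - q ^ n
      = h (q * v ^ (n - 1)) + 1 + q * v ^ (n - 1) + q * v ^ (n - 1) * |log v| := by
    rw [energyControl]
    ring
  rw [hassoc, hE]
  refine (hctrl.abs_mul_add_le hh hκ hn hvol (by positivity) hxy ha ha2 hlog).trans ?_
  have := hh _ hvol
  gcongr

theorem ControlCondition.abs_PhiHat1_mul_le (hctrl : ControlCondition h h' K γ₀)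
    (hh : ∀ d, 0 < d → 0 ≤ h d) (hκ : 0 ≤ κ) (hn : n ≠ 0) (hq : 0 < q) (hv : 0 < v)
    (hx : |x - 1| ≤ 1 / 2) (hy : |y - 1| ≤ 1 / 2) (hxy : |x * y ^ (n - 1) - 1| ≤ γ₀) :
    |PhiHat1 n κ h' (x * q) (y * v)| * q
      ≤ 2 ^ (n + 1) * (K + κ * (n + 1)) * energyControl n h q v := by
  have hK : 0 ≤ K := hctrl.nonneg hh ((abs_nonneg _).trans hxy)
  have hn1 : (1 : ℝ) ≤ n := Nat.one_le_cast.2 (Nat.one_le_iff_ne_zero.2 hn)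
  obtain ⟨hx_low, hx_upp⟩ := abs_le.1 hx
  have hx_pos : 0 < x := by linarith
  have ha : 0 ≤ ((n : ℝ) - 1) / n := div_nonneg (by linarith) (by linarith)
  have ha2 : ((n : ℝ) - 1) / n ≤ 2 := (div_le_iff₀ (by linarith)).2 (by linarith)
  have hbracket := hctrl.abs_mul_pow_add_le hh hκ hn hq hv hx hy hxy ha ha2
  calc |PhiHat1 n κ h' (x * q) (y * v)| * q
      ≤ |PhiHat1 n κ h' (x * q) (y * v)| * (2 * (x * q)) := by
        gcongr
        nlinarith
    _ = 2 * |PhiHat1 n κ h' (x * q) (y * v) * (x * q)| := by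
        rw [abs_mul, abs_of_pos (mul_pos hx_pos hq)]
        ring
    _ ≤ 2 * (κ * (x * q) ^ n
          + 2 ^ n * ((K + κ * (n + 1)) * (energyControl n h q v - q ^ n))) := by
        rw [PhiHat1_mul_eq hn]
        gcongr
        refine (abs_add_le _ _).trans (add_le_add (abs_of_nonneg (by positivity)).le hbracket)
    _ ≤ 2 * ((K + κ * (n + 1)) * (2 * q) ^ n
          + 2 ^ n * ((K + κ * (n + 1)) * (energyControl n h q v - q ^ n))) := by
        gcongr
        · nlinarith
        · linarith
    _ = 2 ^ (n + 1) * (K + κ * (n + 1)) * energyControl n h q v := by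
        rw [mul_pow, pow_succ]
        ring

theorem ControlCondition.abs_PhiHat2_mul_le (hctrl : ControlCondition h h' K γ₀)
    (hh : ∀ d, 0 < d → 0 ≤ h d) (hκ : 0 ≤ κ) (hn : 2 ≤ n) (hq : 0 < q) (hv : 0 < v)
    (hx : |x - 1| ≤ 1 / 2) (hy : |y - 1| ≤ 1 / 2) (hxy : |x * y ^ (n - 1) - 1| ≤ γ₀) :
    |PhiHat2 n κ h' (x * q) (y * v)| * v
      ≤ 2 ^ (n + 1) * (K + κ * (n + 1)) * energyControl n h q v := by
  have hK : 0 ≤ K := hctrl.nonneg hh ((abs_nonneg _).trans hxy)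
  have hn2 : (2 : ℝ) ≤ n := Nat.ofNat_le_cast.2 hn
  have hy_low := (abs_le.1 hy).1
  have hy_pos : 0 < y := by linarith
  have ha : 0 ≤ ((n : ℝ) - 1) / n := div_nonneg (by linarith) (by linarith)
  have ha1 : ((n : ℝ) - 1) / n ≤ 1 := (div_le_one (by linarith)).2 (by linarith)
  have hbracket := hctrl.abs_mul_pow_add_le hh hκ (by lia) hq hv hx hy hxy
    (add_nonneg zero_le_one ha) (by linarith)
  calc |PhiHat2 n κ h' (x * q) (y * v)| * v
      ≤ |PhiHat2 n κ h' (x * q) (y * v)| * (2 * (y * v)) := by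
        gcongr
        nlinarith
    _ = 2 * |PhiHat2 n κ h' (x * q) (y * v) * (y * v)| := by
        rw [abs_mul, abs_of_pos (mul_pos hy_pos hv)]
        ring
    _ ≤ 2 * (2 ^ n * ((K + κ * (n + 1)) * (energyControl n h q v - q ^ n))) := by
        rw [PhiHat2_mul_eq hn]
        gcongr
    _ ≤ 2 * (2 ^ n * ((K + κ * (n + 1)) * energyControl n h q v)) := by
        gcongr
        exact sub_le_self _ (by positivity)
    _ = 2 ^ (n + 1) * (K + κ * (n + 1)) * energyControl n h q v := by
        rw [pow_succ]
        ring

theorem ControlCondition.exists_abs_mul_add_abs_mul_le (hctrl : ControlCondition h h' K γ₀)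
    (hh : ∀ d, 0 < d → 0 ≤ h d) (hκ : 0 ≤ κ) (hn : 2 ≤ n) (hγ₀ : 0 < γ₀) :
    ∃ B τ : ℝ, 0 < τ ∧ τ < 1 ∧ ∀ q v q' v' : ℝ, 0 < q → 0 < v →
      |q' - q| ≤ τ * q → |v' - v| ≤ τ * v →
      |PhiHat1 n κ h' q' v'| * q + |PhiHat2 n κ h' q' v'| * v ≤ B * energyControl n h q v := by
  obtain ⟨τ, hτ, hτ_le, hvol⟩ := exists_perturbation_radius n hγ₀
  refine ⟨2 * (2 ^ (n + 1) * (K + κ * (n + 1))), τ, hτ, by linarith,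
    fun q v q' v' hq hv hq' hv' => ?_⟩
  have hratio : ∀ {s t : ℝ}, 0 < s → |t - s| ≤ τ * s → |t / s - 1| ≤ τ := fun {s t} hs hst => by
    rwa [div_sub_one hs.ne', abs_div, abs_of_pos hs, div_le_iff₀ hs]
  have hx := hratio hq hq'
  have hy := hratio hv hv'
  have h1 := hctrl.abs_PhiHat1_mul_le hh hκ (by lia) hq hv (hx.trans hτ_le) (hy.trans hτ_le)
    (hvol _ _ hx hy)
  have h2 := hctrl.abs_PhiHat2_mul_le hh hκ hn hq hv (hx.trans hτ_le) (hy.trans hτ_le)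
    (hvol _ _ hx hy)
  rw [div_mul_cancel₀ _ hq.ne', div_mul_cancel₀ _ hv.ne'] at h1 h2
  linarith

end Perturbation

section Coercivity

variable {q v R u lam : ℝ}

theorem exists_energyControl_le (hn : 2 ≤ n) (hκ : 0 < κ) (hh : ∀ d, 0 < d → 0 ≤ h d) :
    ∃ C > 0, ∀ q v : ℝ, 0 < q → 0 < v →
      energyControl n h q v ≤ C * PhiHat n κ h q v
        + (C * (κ * ((n : ℝ) - 1)) + 1) * (q * v ^ (n - 1) * (log v)⁻) + q * v ^ (n - 1) + 1 := by
  have hn2 : (2 : ℝ) ≤ n := Nat.ofNat_le_cast.2 hn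
  refine ⟨n / κ + 1 + 1 / κ, by positivity, fun q v hq hv => ?_⟩
  set C := n / κ + 1 + 1 / κ with hC
  set d := q * v ^ (n - 1) with hd
  have hd_pos : 0 < d := by positivity
  have hpow : 1 ≤ C * (κ / n) := by
    calc 1 ≤ 1 + (κ / n + 1 / n) := le_add_of_nonneg_right (by positivity)
      _ = C * (κ / n) := by rw [hC]; field_simp; ring
  have hvol : 1 ≤ C := by
    have : 0 ≤ n / κ + 1 / κ := by positivity
    linarith
  have hlog : 1 ≤ C * (κ * ((n : ℝ) - 1)) := by
    calc 1 ≤ ((n : ℝ) + κ + 1) * (n - 1) := by nlinarith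
      _ = C * (κ * ((n : ℝ) - 1)) := by rw [hC]; field_simp
  have hpos : 0 ≤ (log v)⁺ := posPart_nonneg _
  have hconst : 0 ≤ C * (κ * d * (((n : ℝ) - 1) / n)) := by
    have : 0 ≤ ((n : ℝ) - 1) / n := div_nonneg (by linarith) (by linarith)
    positivity
  have habs := posPart_add_negPart (log v)
  have hsub := posPart_sub_negPart (log v)
  rw [energyControl, PhiHat, ← hd, ← habs]
  nth_rewrite 3 [← hsub]
  have h1 := mul_le_mul_of_nonneg_right hpow (pow_pos hq n).le
  have h2 := mul_le_mul_of_nonneg_right hvol (hh d hd_pos)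
  have h3 := mul_le_mul_of_nonneg_right hlog (mul_nonneg hd_pos.le hpos)
  linarith

theorem pow_mul_mul_div_pow_le (hR : 0 < R) (hq : 0 < q) (hu : 0 < u) (hul : u ≤ lam) :
    R ^ (n - 1) * (q * (u / R) ^ (n - 1)) ≤ lam ^ (n - 1) * q := by
  rw [mul_left_comm, ← mul_pow, mul_div_cancel₀ _ hR.ne', mul_comm]
  gcongr

theorem negPart_log_div_le (hR : 0 < R) (hR1 : R ≤ 1) (hu : 0 < u) : (log (u / R))⁻ ≤ 1 / u := by
  refine max_le ?_ (by positivity)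
  rw [← log_inv, inv_div]
  calc log (R / u) ≤ R / u := (log_le_sub_one_of_pos (by positivity)).trans (by linarith)
    _ ≤ 1 / u := by gcongr

theorem pow_mul_mul_negPart_log_le (hn : 2 ≤ n) (hR : 0 < R) (hR1 : R ≤ 1) (hq : 0 < q)
    (hu : 0 < u) (hul : u ≤ lam) :
    R ^ (n - 1) * (q * (u / R) ^ (n - 1) * (log (u / R))⁻) ≤ lam ^ (n - 2) * q := by
  calc R ^ (n - 1) * (q * (u / R) ^ (n - 1) * (log (u / R))⁻)
      ≤ R ^ (n - 1) * (q * (u / R) ^ (n - 1) * (1 / u)) := by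
        gcongr
        exact negPart_log_div_le hR hR1 hu
    _ = u ^ (n - 2) * q := by
        rw [div_pow, ← pow_sub_two_mul hn u]
        field_simp
    _ ≤ lam ^ (n - 2) * q := by gcongr

theorem exists_pow_mul_energyControl_le (hn : 2 ≤ n) (hκ : 0 < κ) (hh : ∀ d, 0 < d → 0 ≤ h d)
    (lam : ℝ) :
    ∃ C > 0, ∃ C', ∀ R q u : ℝ, 0 < R → R ≤ 1 → 0 < q → 0 < u → u ≤ lam →
      R ^ (n - 1) * energyControl n h q (u / R)
        ≤ C * (R ^ (n - 1) * PhiHat n κ h q (u / R)) + (C' * q + 1) := by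
  obtain ⟨C, hC, hle⟩ := exists_energyControl_le hn hκ hh
  have hn2 : (2 : ℝ) ≤ n := Nat.ofNat_le_cast.2 hn
  set D := C * (κ * ((n : ℝ) - 1)) + 1
  have hD_nonneg : 0 ≤ D :=
    add_nonneg (mul_nonneg hC.le (mul_nonneg hκ.le (by linarith))) zero_le_one
  refine ⟨C, hC, D * lam ^ (n - 2) + lam ^ (n - 1), fun R q u hR hR1 hq hu hul => ?_⟩
  have hmul := mul_le_mul_of_nonneg_left (hle q (u / R) hq (by positivity))
    (pow_pos hR (n - 1)).le
  have hlog := mul_le_mul_of_nonneg_left (pow_mul_mul_negPart_log_le hn hR hR1 hq hu hul) hD_nonneg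
  have hvol := pow_mul_mul_div_pow_le (n := n) hR hq hu hul
  have hone : R ^ (n - 1) ≤ 1 := pow_le_one₀ hR.le hR1
  linarith

end Coercivity

theorem pow_mul_PhiHat1_eq_pow_mul_THat {q R u : ℝ} (hR : 0 < R) (hu : 0 < u) :
    R ^ (n - 1) * PhiHat1 n κ h' q (u / R) = u ^ (n - 1) * THat n κ h' q (u / R) := by
  have hv : 0 < u / R := div_pos hu hR
  have hRu : R ^ (n - 1) * (u / R) ^ (n - 1) = u ^ (n - 1) := by
    rw [← mul_pow, mul_div_cancel₀ _ hR.ne']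
  have hqu : (u / R) ^ (n - 1) * (q / (u / R)) ^ (n - 1) = q ^ (n - 1) := by
    rw [← mul_pow, mul_div_cancel₀ _ hv.ne']
  rw [← hRu, PhiHat1, THat, ← hqu]
  ring

section Inversion

theorem VolumetricEnergy.strictMonoOn_PhiHat1 (hh : VolumetricEnergy h h') (hκ : 0 < κ)
    (hn : 2 ≤ n) {v : ℝ} (hv : 0 < v) : StrictMonoOn (PhiHat1 n κ h' · v) (Ioi 0) := by
  intro q hq q' hq' hlt
  have hq : 0 < q := hq
  have hq' : 0 < q' := hq'
  have hpow : q ^ (n - 1) < q' ^ (n - 1) := pow_lt_pow_left₀ hlt hq.le (by lia)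
  have hderiv : h' (q * v ^ (n - 1)) ≤ h' (q' * v ^ (n - 1)) :=
    hh.monotoneOn_deriv (mem_Ioi.2 (by positivity)) (mem_Ioi.2 (by positivity)) (by gcongr)
  exact add_lt_add_left (add_lt_add_of_lt_of_le (mul_lt_mul_of_pos_left hpow hκ)
    (mul_le_mul_of_nonneg_left hderiv (by positivity))) _

theorem VolumetricEnergy.tendsto_PhiHat1_zero (hh : VolumetricEnergy h h') {v : ℝ} (hv : 0 < v) :
    Tendsto (PhiHat1 n κ h' · v) (nhdsWithin 0 (Ioi 0)) atBot := by
  have hv_pow : 0 < v ^ (n - 1) := pow_pos hv _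
  have hvol : Tendsto (fun q => q * v ^ (n - 1)) (nhdsWithin 0 (Ioi 0)) (nhdsWithin 0 (Ioi 0)) := by
    refine tendsto_nhdsWithin_iff.2 ⟨?_, ?_⟩
    · exact ((continuous_mul_const _).tendsto' 0 0 (zero_mul _)).mono_left nhdsWithin_le_nhds
    · filter_upwards [self_mem_nhdsWithin] with q hq using mul_pos hq hv_pow
  have hpow : Tendsto (fun q : ℝ => κ * q ^ (n - 1)) (nhdsWithin 0 (Ioi 0))
      (nhds (κ * 0 ^ (n - 1))) :=
    (Continuous.tendsto (by fun_prop) 0).mono_left nhdsWithin_le_nhds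
  exact (hpow.add_atBot ((hh.tendsto_deriv_zero.comp hvol).const_mul_atBot hv_pow)).atBot_add
    tendsto_const_nhds

theorem VolumetricEnergy.tendsto_PhiHat1_atTop (hh : VolumetricEnergy h h') (hκ : 0 < κ)
    (hn : 2 ≤ n) {v : ℝ} (hv : 0 < v) : Tendsto (PhiHat1 n κ h' · v) atTop atTop := by
  have hpow : Tendsto (fun q : ℝ => κ * q ^ (n - 1)) atTop atTop :=
    (tendsto_pow_atTop (by lia)).const_mul_atTop hκ
  have hderiv : ∀ᶠ q : ℝ in atTop,
      v ^ (n - 1) * h' (1 * v ^ (n - 1)) ≤ v ^ (n - 1) * h' (q * v ^ (n - 1)) := by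
    filter_upwards [eventually_ge_atTop 1] with q hq
    refine mul_le_mul_of_nonneg_left (hh.monotoneOn_deriv ?_ ?_ (by gcongr)) (by positivity)
    · exact mem_Ioi.2 (by positivity)
    · exact mem_Ioi.2 (by positivity)
  exact (tendsto_atTop_add_right_of_le' _ _ hpow hderiv).atTop_add tendsto_const_nhds

theorem VolumetricEnergy.exists_PhiHat1_eq (hh : VolumetricEnergy h h') (hκ : 0 < κ)
    (hn : 2 ≤ n) {v : ℝ} (hv : 0 < v) (c : ℝ) : ∃ q, 0 < q ∧ PhiHat1 n κ h' q v = c := by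
  have hcont : ContinuousOn (PhiHat1 n κ h' · v) (Ioi 0) :=
    (continuousOn_PhiHat1 hh.continuousOn_deriv).comp
      (continuousOn_id.prodMk continuousOn_const) fun q hq => ⟨hq, hv⟩
  obtain ⟨q, hq, hqc⟩ := isPreconnected_Ioi.intermediate_value_Iii (l₁ := nhdsWithin 0 (Ioi 0))
    inf_le_right (le_principal_iff.2 (Ioi_mem_atTop 0)) hcont (hh.tendsto_PhiHat1_zero hv)
    (hh.tendsto_PhiHat1_atTop hκ hn hv) (mem_univ c)
  exact ⟨q, hq, hqc⟩

end Inversion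

end StoredEnergy

section Admissible

variable {lam : ℝ} {r r' η P Q : ℝ → ℝ}

theorem adm_const_mul_id (hlam : 0 < lam) : Adm lam (fun R => lam * R) fun _ => lam where
  intg := integrableOn_const measure_Ioc_lt_top.ne
  ftc R hR := by
    simp only [mul_zero, zero_add, setIntegral_const, measureReal_def, Real.volume_Ioc, sub_zero,
      ENNReal.toReal_ofReal hR.1, smul_eq_mul, mul_comm]
  derivPos := .of_forall fun _ => hlam
  bc := mul_one lam
  c0 := (mul_zero lam).ge

/-- `η` is the derivative of a variation `φ(R) = ∫ t in 1..R, η t` of the deformation `r` which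
vanishes at `R = 1` and is relatively bounded: `|η| ≤ r'` and `|φ| ≤ r`. -/
structure RelativeVariation (r r' η : ℝ → ℝ) : Prop where
  integrableOn : IntegrableOn η (Ioc 0 1)
  abs_le : ∀ᵐ R ∂volume.restrict (Ioc 0 1), |η R| ≤ r' R
  abs_integral_le : ∀ R ∈ Icc (0 : ℝ) 1, |∫ t in (1 : ℝ)..R, η t| ≤ r R

theorem intervalIntegrable_of_integrableOn_Ioc {f : ℝ → ℝ} {a b x y : ℝ}
    (hf : IntegrableOn f (Ioc a b)) (hx : x ∈ Icc a b) (hy : y ∈ Icc a b) :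
    IntervalIntegrable f volume x y :=
  intervalIntegrable_iff.2 (hf.mono_set (Ioc_subset_Ioc (le_min hx.1 hy.1) (max_le hx.2 hy.2)))

theorem intervalIntegral_eq_sub_setIntegral {f : ℝ → ℝ} {a b x : ℝ} (hf : IntegrableOn f (Ioc a b))
    (hx : x ∈ Icc a b) : ∫ t in b..x, f t = (∫ t in a..x, f t) - ∫ t in Ioc a b, f t := by
  have hab : a ≤ b := hx.1.trans hx.2
  rw [← intervalIntegral.integral_of_le hab, intervalIntegral.integral_interval_sub_left
    (intervalIntegrable_of_integrableOn_Ioc hf (left_mem_Icc.2 hab) hx)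
    (intervalIntegrable_of_integrableOn_Ioc hf (left_mem_Icc.2 hab) (right_mem_Icc.2 hab))]

theorem continuousOn_integral_right {f : ℝ → ℝ} {a b : ℝ} (hf : IntegrableOn f (Ioc a b))
    (hab : a ≤ b) : ContinuousOn (fun x => ∫ t in a..x, f t) (Icc a b) := by
  rw [← uIcc_of_le hab]
  refine intervalIntegral.continuousOn_primitive_interval ?_
  rwa [uIcc_of_le hab, integrableOn_Icc_iff_integrableOn_Ioc]

namespace Adm

theorem integral_deriv (hadm : Adm lam r r') {a b : ℝ} (ha : a ∈ Icc 0 1) (hb : b ∈ Icc 0 1) :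
    ∫ t in a..b, r' t = r b - r a := by
  have h0 : (0 : ℝ) ∈ Icc 0 1 := left_mem_Icc.2 zero_le_one
  rw [hadm.ftc b hb, hadm.ftc a ha, ← intervalIntegral.integral_of_le ha.1,
    ← intervalIntegral.integral_of_le hb.1, add_sub_add_left_eq_sub,
    intervalIntegral.integral_interval_sub_left
      (intervalIntegrable_of_integrableOn_Ioc hadm.intg h0 hb)
      (intervalIntegrable_of_integrableOn_Ioc hadm.intg h0 ha)]

theorem continuousOn (hadm : Adm lam r r') : ContinuousOn r (Icc 0 1) :=
  (continuousOn_const.add (intervalIntegral.continuousOn_primitive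
    ((integrableOn_Icc_iff_integrableOn_Ioc).2 hadm.intg))).congr hadm.ftc

theorem strictMonoOn (hadm : Adm lam r r') : StrictMonoOn r (Icc 0 1) := by
  intro a ha b hb hab
  have hsub : Ioc a b ⊆ Ioc 0 1 := Ioc_subset_Ioc ha.1 hb.2
  have hpos : 0 < ∫ t in Ioc a b, r' t := by
    refine integral_pos_of_ae_pos ?_ (hadm.intg.mono_set hsub)
      (ae_restrict_of_ae_restrict_of_subset hsub hadm.derivPos)
    simp only [ne_eq, Measure.restrict_eq_zero, Real.volume_Ioc, ENNReal.ofReal_eq_zero, not_le,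
      sub_pos, hab]
  rwa [← intervalIntegral.integral_of_le hab.le, hadm.integral_deriv ha hb, sub_pos] at hpos

theorem pos (hadm : Adm lam r r') {R : ℝ} (hR : R ∈ Ioc 0 1) : 0 < r R :=
  hadm.c0.trans_lt (hadm.strictMonoOn (left_mem_Icc.2 zero_le_one) (Ioc_subset_Icc_self hR) hR.1)

theorem le_lam (hadm : Adm lam r r') {R : ℝ} (hR : R ∈ Icc 0 1) : r R ≤ lam :=
  (hadm.strictMonoOn.monotoneOn hR (right_mem_Icc.2 zero_le_one) hR.2).trans_eq hadm.bc

theorem lam_pos (hadm : Adm lam r r') : 0 < lam :=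
  hadm.bc ▸ hadm.pos (right_mem_Ioc.2 zero_lt_one)

theorem add_mul (hadm : Adm lam r r') (hη : RelativeVariation r r' η) {t : ℝ} (ht : |t| < 1) :
    Adm lam (fun R => r R + t * ∫ s in (1 : ℝ)..R, η s) fun R => r' R + t * η R where
  intg := hadm.intg.add (hη.integrableOn.const_mul t)
  ftc R hR := by
    have hsub : Ioc 0 R ⊆ Ioc 0 1 := Ioc_subset_Ioc_right hR.2
    rw [integral_add (hadm.intg.mono_set hsub) ((hη.integrableOn.mono_set hsub).const_mul t),
      integral_const_mul, intervalIntegral_eq_sub_setIntegral hη.integrableOn hR,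
      intervalIntegral_eq_sub_setIntegral hη.integrableOn (left_mem_Icc.2 zero_le_one),
      intervalIntegral.integral_same, intervalIntegral.integral_of_le hR.1, hadm.ftc R hR]
    ring
  derivPos := by
    filter_upwards [hη.abs_le, hadm.derivPos] with R hηR hR
    have : |t * η R| < r' R := by
      rw [abs_mul]
      exact (mul_le_mul_of_nonneg_left hηR (abs_nonneg t)).trans_lt (mul_lt_of_lt_one_left hR ht)
    linarith [(abs_lt.1 this).1]
  bc := by rw [intervalIntegral.integral_same, mul_zero, add_zero, hadm.bc]
  c0 := by
    have h0 := hη.abs_integral_le 0 (left_mem_Icc.2 zero_le_one)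
    have : |t * ∫ s in (1 : ℝ)..0, η s| ≤ r 0 := by
      rw [abs_mul]
      nlinarith [abs_nonneg (∫ s in (1 : ℝ)..0, η s)]
    linarith [(_root_.abs_le.1 this).1]

theorem integral_abs_le (hadm : Adm lam r r') (hη : IntegrableOn η (Ioc 0 1))
    (hη_le : ∀ᵐ R ∂volume.restrict (Ioc 0 1), |η R| ≤ r' R) {R : ℝ} (hR : R ∈ Icc 0 1) :
    ∫ t in (0 : ℝ)..R, |η t| ≤ r R := by
  have h0 : (0 : ℝ) ∈ Icc 0 1 := left_mem_Icc.2 zero_le_one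
  calc ∫ t in (0 : ℝ)..R, |η t| ≤ ∫ t in (0 : ℝ)..R, r' t := by
        refine intervalIntegral.integral_mono_ae_restrict hR.1
          (intervalIntegrable_of_integrableOn_Ioc hη.abs h0 hR)
          (intervalIntegrable_of_integrableOn_Ioc hadm.intg h0 hR) ?_
        rw [← restrict_Ioc_eq_restrict_Icc]
        exact ae_restrict_of_ae_restrict_of_subset (Ioc_subset_Ioc_right hR.2) hη_le
    _ = r R - r 0 := hadm.integral_deriv h0 hR
    _ ≤ r R := sub_le_self _ hadm.c0

theorem relativeVariation_of_integral_eq_zero (hadm : Adm lam r r') (hη : IntegrableOn η (Ioc 0 1))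
    (hη_le : ∀ᵐ R ∂volume.restrict (Ioc 0 1), |η R| ≤ r' R)
    (hη_mean : ∫ t in Ioc (0 : ℝ) 1, η t = 0) : RelativeVariation r r' η where
  integrableOn := hη
  abs_le := hη_le
  abs_integral_le R hR := by
    rw [intervalIntegral_eq_sub_setIntegral hη hR, hη_mean, sub_zero]
    exact (intervalIntegral.abs_integral_le_integral_abs hR.1).trans
      (hadm.integral_abs_le hη hη_le hR)

theorem relativeVariation_const_mul_deriv (hadm : Adm lam r r') {c : ℝ} (hc : 0 ≤ c) (hc1 : c ≤ 1)
    (hc_lam : c * lam ≤ r 0) : RelativeVariation r r' fun R => c * r' R where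
  integrableOn := hadm.intg.const_mul c
  abs_le := by
    filter_upwards [hadm.derivPos] with R hR
    rw [abs_of_nonneg (mul_nonneg hc hR.le)]
    exact mul_le_of_le_one_left hR.le hc1
  abs_integral_le R hR := by
    have h0R : r 0 ≤ r R := hadm.strictMonoOn.monotoneOn (left_mem_Icc.2 zero_le_one) hR hR.1
    have hR_lam := hadm.le_lam hR
    rw [intervalIntegral.integral_const_mul,
      hadm.integral_deriv (right_mem_Icc.2 zero_le_one) hR, hadm.bc, abs_mul, abs_of_nonneg hc,
      abs_of_nonpos (by linarith)]
    nlinarith [hadm.c0]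

theorem integrableOn_of_integrableOn_mul (hadm : Adm lam r r')
    (hQ : AEStronglyMeasurable Q (volume.restrict (Ioc 0 1)))
    (hQr : IntegrableOn (fun R => Q R * r R) (Ioc 0 1)) {a : ℝ} (ha : a ∈ Icc 0 1) (hra : 0 < r a) :
    IntegrableOn Q (Ioc a 1) := by
  have hsub : Ioc a 1 ⊆ Ioc 0 1 := Ioc_subset_Ioc_left ha.1
  refine ((hQr.mono_set hsub).norm.const_mul (r a)⁻¹).mono' (hQ.mono_measure
    (Measure.restrict_mono hsub le_rfl)) ?_
  filter_upwards [ae_restrict_mem measurableSet_Ioc] with R hR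
  have haR : r a ≤ r R :=
    hadm.strictMonoOn.monotoneOn ha (Ioc_subset_Icc_self (hsub hR)) hR.1.le
  rw [norm_mul, Real.norm_of_nonneg (hra.le.trans haR), mul_left_comm]
  exact le_mul_of_one_le_right (norm_nonneg _)
    ((one_le_inv_mul₀ hra).2 haR)

theorem integrableOn_mul_integral_abs (hadm : Adm lam r r') (hη : IntegrableOn η (Ioc 0 1))
    (hη_le : ∀ᵐ R ∂volume.restrict (Ioc 0 1), |η R| ≤ r' R)
    (hQ : AEStronglyMeasurable Q (volume.restrict (Ioc 0 1)))
    (hQr : IntegrableOn (fun R => Q R * r R) (Ioc 0 1)) :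
    IntegrableOn (fun R => Q R * ∫ t in (0 : ℝ)..R, |η t|) (Ioc 0 1) := by
  have hprim : AEStronglyMeasurable (fun R => ∫ t in (0 : ℝ)..R, |η t|)
      (volume.restrict (Ioc 0 1)) :=
    ((continuousOn_integral_right hη.abs zero_le_one).mono
      Ioc_subset_Icc_self).aestronglyMeasurable measurableSet_Ioc
  refine hQr.norm.mono' (hQ.mul hprim) ?_
  filter_upwards [ae_restrict_mem measurableSet_Ioc] with R hR
  have hR_le := hadm.integral_abs_le hη hη_le (Ioc_subset_Icc_self hR)
  rw [norm_mul, norm_mul, Real.norm_of_nonneg (hadm.pos hR).le,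
    Real.norm_of_nonneg (intervalIntegral.integral_nonneg hR.1.le fun t _ => abs_nonneg _)]
  gcongr

theorem integral_sub_tail_mul_deriv (hadm : Adm lam r r')
    (hQ : AEStronglyMeasurable Q (volume.restrict (Ioc 0 1)))
    (hQr : IntegrableOn (fun R => Q R * r R) (Ioc 0 1)) (C : ℝ) :
    ∫ R in Ioc (0 : ℝ) 1, (C - ∫ t in R..1, Q t) * r' R
      = C * (lam - r 0) - ∫ R in Ioc (0 : ℝ) 1, Q R * (r R - r 0) := by
  have hmem0 : (0 : ℝ) ∈ Icc 0 1 := left_mem_Icc.2 zero_le_one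
  have habs : ∀ᵐ R ∂volume.restrict (Ioc 0 1), |r' R| ≤ r' R :=
    hadm.derivPos.mono fun R hR => (abs_of_pos hR).le
  obtain ⟨htail_int, htail⟩ := integral_mul_tail_eq hQ hadm.intg
    (hadm.integrableOn_mul_integral_abs hadm.intg habs hQ hQr)
  have hprim : ∀ R ∈ Ioc (0 : ℝ) 1, Q R * ∫ t in (0 : ℝ)..R, r' t = Q R * (r R - r 0) :=
    fun R hR => by rw [hadm.integral_deriv hmem0 (Ioc_subset_Icc_self hR)]
  simp only [sub_mul]
  rw [integral_sub (hadm.intg.const_mul C) htail_int, htail, integral_const_mul,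
    setIntegral_congr_fun measurableSet_Ioc hprim, ← intervalIntegral.integral_of_le zero_le_one,
    hadm.integral_deriv hmem0 (right_mem_Icc.2 zero_le_one), hadm.bc]

end Adm

/-- Weak equilibrium of a deformation `r` with flux `P` and source `Q`: the first variation
`∫ (P φ' + Q φ)` vanishes along every relative variation `φ` of `r`. -/
def WeakStationary (r r' P Q : ℝ → ℝ) : Prop :=
  ∀ η, RelativeVariation r r' η →
    ∫ R in Ioc (0 : ℝ) 1, (P R * η R + Q R * ∫ t in (1 : ℝ)..R, η t) = 0

namespace WeakStationary

theorem integral_add_tail_mul_eq_zero (hstat : WeakStationary r r' P Q) (hadm : Adm lam r r')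
    (hP : AEStronglyMeasurable P (volume.restrict (Ioc 0 1)))
    (hQ : AEStronglyMeasurable Q (volume.restrict (Ioc 0 1)))
    (hPr' : IntegrableOn (fun R => P R * r' R) (Ioc 0 1))
    (hQr : IntegrableOn (fun R => Q R * r R) (Ioc 0 1)) (hη : IntegrableOn η (Ioc 0 1))
    (hη_le : ∀ᵐ R ∂volume.restrict (Ioc 0 1), |η R| ≤ r' R)
    (hη_mean : ∫ R in Ioc (0 : ℝ) 1, η R = 0) :
    ∫ R in Ioc (0 : ℝ) 1, (P R + ∫ t in R..1, Q t) * η R = 0 := by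
  have hPη : IntegrableOn (fun R => P R * η R) (Ioc 0 1) := by
    refine hPr'.norm.mono' (hP.mul hη.1) ?_
    filter_upwards [hη_le] with R hR
    rw [norm_mul, norm_mul]
    gcongr
    exact hR.trans (le_abs_self _)
  obtain ⟨htail_int, htail⟩ :=
    integral_mul_tail_eq hQ hη (hadm.integrableOn_mul_integral_abs hη hη_le hQ hQr)
  have hQφ : IntegrableOn (fun R => Q R * ∫ t in (0 : ℝ)..R, η t) (Ioc 0 1) := by
    refine (hadm.integrableOn_mul_integral_abs hη hη_le hQ hQr).norm.mono' (hQ.mul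
      (((continuousOn_integral_right hη zero_le_one).mono
        Ioc_subset_Icc_self).aestronglyMeasurable measurableSet_Ioc)) ?_
    filter_upwards [ae_restrict_mem measurableSet_Ioc] with R hR
    rw [norm_mul, norm_mul]
    gcongr
    exact (intervalIntegral.abs_integral_le_integral_abs hR.1.le).trans (le_abs_self _)
  have hzero := hstat η (hadm.relativeVariation_of_integral_eq_zero hη hη_le hη_mean)
  have hprim : ∀ R ∈ Ioc (0 : ℝ) 1,
      P R * η R + Q R * ∫ t in (1 : ℝ)..R, η t = P R * η R + Q R * ∫ t in (0 : ℝ)..R, η t :=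
    fun R hR => by
      rw [intervalIntegral_eq_sub_setIntegral hη (Ioc_subset_Icc_self hR), hη_mean, sub_zero]
  rw [setIntegral_congr_fun measurableSet_Ioc hprim, integral_add hPη hQφ, ← htail,
    ← integral_add hPη htail_int] at hzero
  simpa only [add_mul] using hzero

theorem exists_ae_eq_sub_integral (hstat : WeakStationary r r' P Q) (hadm : Adm lam r r')
    (hP : AEStronglyMeasurable P (volume.restrict (Ioc 0 1)))
    (hQ : AEStronglyMeasurable Q (volume.restrict (Ioc 0 1)))
    (hPr' : IntegrableOn (fun R => P R * r' R) (Ioc 0 1))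
    (hQr : IntegrableOn (fun R => Q R * r R) (Ioc 0 1)) :
    ∃ C, P =ᵐ[volume.restrict (Ioc 0 1)] fun R => C - ∫ t in R..1, Q t := by
  have habs : ∀ᵐ R ∂volume.restrict (Ioc 0 1), |r' R| ≤ r' R :=
    hadm.derivPos.mono fun R hR => (abs_of_pos hR).le
  have hFr' : IntegrableOn (fun R => (P R + ∫ t in R..1, Q t) * r' R) (Ioc 0 1) := by
    simp only [add_mul]
    exact hPr'.add (integral_mul_tail_eq hQ hadm.intg
      (hadm.integrableOn_mul_integral_abs hadm.intg habs hQ hQr)).1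
  obtain ⟨C, hC⟩ := exists_ae_eq_const_of_integral_mul_eq_zero hadm.intg hadm.derivPos hFr'
    fun η hη hη_le hη_mean =>
      hstat.integral_add_tail_mul_eq_zero hadm hP hQ hPr' hQr hη hη_le hη_mean
  exact ⟨C, hC.mono fun R hR => eq_sub_of_add_eq hR⟩

theorem const_eq_integral_of_pos (hstat : WeakStationary r r' P Q) (hadm : Adm lam r r')
    (hr0 : 0 < r 0) (hQ : IntegrableOn Q (Ioc 0 1))
    (hPr' : IntegrableOn (fun R => P R * r' R) (Ioc 0 1))
    (hQr : IntegrableOn (fun R => Q R * r R) (Ioc 0 1)) {C : ℝ}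
    (hC : P =ᵐ[volume.restrict (Ioc 0 1)] fun R => C - ∫ t in R..1, Q t) :
    C = ∫ t in (0 : ℝ)..1, Q t := by
  have hmem0 : (0 : ℝ) ∈ Icc 0 1 := left_mem_Icc.2 zero_le_one
  have hmem1 : (1 : ℝ) ∈ Icc 0 1 := right_mem_Icc.2 zero_le_one
  set c := min 1 (r 0 / lam)
  have hc_pos : 0 < c := lt_min one_pos (div_pos hr0 hadm.lam_pos)
  have hzero := hstat _ (hadm.relativeVariation_const_mul_deriv hc_pos.le (min_le_left _ _)
    ((le_div_iff₀ hadm.lam_pos).1 (min_le_right _ _)))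
  have hvar : ∀ R ∈ Ioc (0 : ℝ) 1, P R * (c * r' R) + Q R * ∫ t in (1 : ℝ)..R, c * r' t
      = c * (P R * r' R + (Q R * r R - lam * Q R)) := fun R hR => by
    rw [intervalIntegral.integral_const_mul,
      hadm.integral_deriv hmem1 (Ioc_subset_Icc_self hR), hadm.bc]
    ring
  rw [setIntegral_congr_fun measurableSet_Ioc hvar, integral_const_mul] at hzero
  have hflux : ∫ R in Ioc (0 : ℝ) 1, P R * r' R
      = C * (lam - r 0) - ∫ R in Ioc (0 : ℝ) 1, Q R * (r R - r 0) := by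
    rw [← hadm.integral_sub_tail_mul_deriv hQ.1 hQr C]
    exact integral_congr_ae (hC.mono fun R hR => congrArg (· * r' R) hR)
  have hmass : ∫ R in Ioc (0 : ℝ) 1, Q R * (r R - r 0)
      = (∫ R in Ioc (0 : ℝ) 1, Q R * r R) - r 0 * ∫ R in Ioc (0 : ℝ) 1, Q R := by
    simp only [mul_sub, mul_comm _ (r 0)]
    rw [integral_sub hQr (hQ.const_mul _), integral_const_mul]
  have hQ_int : IntegrableOn (fun R => Q R * r R - lam * Q R) (Ioc 0 1) :=
    hQr.sub (hQ.const_mul lam)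
  have hvar_zero := (mul_eq_zero.1 hzero).resolve_left hc_pos.ne'
  rw [integral_add hPr' hQ_int, integral_sub hQr (hQ.const_mul lam),
    integral_const_mul, hflux, hmass] at hvar_zero
  have hgap : 0 < lam - r 0 := sub_pos.2 (hadm.bc ▸ hadm.strictMonoOn hmem0 hmem1 one_pos)
  rw [intervalIntegral.integral_of_le zero_le_one]
  refine mul_right_cancel₀ hgap.ne' ?_
  linarith

end WeakStationary

end Admissible

section RadialEnergy

variable {n : ℕ} {κ K γ₀ lam : ℝ} {h h' r r' : ℝ → ℝ}

/-- The integrand `R^(n-1) Φ̂(q, u/R, …, u/R)` of the energy at radius `R`, for `q = r'(R)` and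
`u = r(R)`. -/
def radialDensity (n : ℕ) (κ : ℝ) (h : ℝ → ℝ) (R q u : ℝ) : ℝ :=
  R ^ (n - 1) * PhiHat n κ h q (u / R)

/-- The flux `R^(n-1) Φ̂_{,1}` of the equilibrium equation, the partial derivative of
`radialDensity` in `q = r'(R)`. -/
def radialFlux (n : ℕ) (κ : ℝ) (h' : ℝ → ℝ) (R q u : ℝ) : ℝ :=
  R ^ (n - 1) * PhiHat1 n κ h' q (u / R)

/-- The source `(n-1) R^(n-2) Φ̂_{,2}` of the equilibrium equation, the partial derivative of
`radialDensity` in `u = r(R)`; the factor `n - 1` counts the equal stretches `u / R`. -/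
def radialSource (n : ℕ) (κ : ℝ) (h' : ℝ → ℝ) (R q u : ℝ) : ℝ :=
  ((n : ℝ) - 1) * R ^ (n - 2) * PhiHat2 n κ h' q (u / R)

theorem radialSource_mul_eq (hn : 2 ≤ n) {R : ℝ} (hR : 0 < R) (q u w : ℝ) :
    radialSource n κ h' R q u * w
      = ((n : ℝ) - 1) * (R ^ (n - 1) * (PhiHat2 n κ h' q (u / R) * (w / R))) := by
  rw [radialSource, ← pow_sub_two_mul hn R]
  field_simp

theorem VolumetricEnergy.hasFDerivAt_radialDensity (hh : VolumetricEnergy h h') (hn : 2 ≤ n)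
    {R q u : ℝ} (hR : 0 < R) (hq : 0 < q) (hu : 0 < u) :
    HasFDerivAt (fun z : ℝ × ℝ => radialDensity n κ h R z.1 z.2)
      (radialFlux n κ h' R q u • ContinuousLinearMap.fst ℝ ℝ ℝ
        + radialSource n κ h' R q u • ContinuousLinearMap.snd ℝ ℝ ℝ) (q, u) := by
  have hv : 0 < u / R := div_pos hu hR
  have hstretch : HasFDerivAt (fun z : ℝ × ℝ => (z.1, z.2 / R))
      ((ContinuousLinearMap.fst ℝ ℝ ℝ).prod (R⁻¹ • ContinuousLinearMap.snd ℝ ℝ ℝ)) (q, u) := by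
    simpa only [div_eq_mul_inv] using hasFDerivAt_fst.prodMk (hasFDerivAt_snd.mul_const R⁻¹)
  have hPhi := hasFDerivAt_PhiHat (κ := κ) hn hv (hh.hasDerivAt (q * (u / R) ^ (n - 1))
    (by positivity))
  refine ((hPhi.comp (q, u) hstretch).const_mul (R ^ (n - 1))).congr_fderiv ?_
  refine ContinuousLinearMap.ext fun z => ?_
  simp only [smul_apply, add_apply, ContinuousLinearMap.comp_apply, ContinuousLinearMap.prod_apply,
    ContinuousLinearMap.coe_fst', ContinuousLinearMap.coe_snd', smul_eq_mul,
    radialSource_mul_eq hn hR, radialFlux]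
  ring

theorem ControlCondition.exists_abs_radialFlux_mul_add_le (hctrl : ControlCondition h h' K γ₀)
    (hh : ∀ d, 0 < d → 0 ≤ h d) (hκ : 0 ≤ κ) (hn : 2 ≤ n) (hγ₀ : 0 < γ₀) :
    ∃ B τ : ℝ, 0 < τ ∧ τ < 1 ∧ ∀ R q u q' u' : ℝ, 0 < R → 0 < q → 0 < u →
      |q' - q| ≤ τ * q → |u' - u| ≤ τ * u →
      |radialFlux n κ h' R q' u'| * q + |radialSource n κ h' R q' u'| * u
        ≤ B * (R ^ (n - 1) * energyControl n h q (u / R)) := by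
  obtain ⟨B, τ, hτ, hτ1, hle⟩ := hctrl.exists_abs_mul_add_abs_mul_le hh hκ hn hγ₀
  have hn2 : (2 : ℝ) ≤ n := Nat.ofNat_le_cast.2 hn
  refine ⟨n * B, τ, hτ, hτ1, fun R q u q' u' hR hq hu hq' hu' => ?_⟩
  have hv : 0 < u / R := div_pos hu hR
  have hv' : |u' / R - u / R| ≤ τ * (u / R) := by
    rw [← sub_div, abs_div, abs_of_pos hR, ← mul_div_assoc]
    gcongr
  have hsource : |radialSource n κ h' R q' u'| * u
      = ((n : ℝ) - 1) * (R ^ (n - 1) * (|PhiHat2 n κ h' q' (u' / R)| * (u / R))) := by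
    have habs := congrArg abs (radialSource_mul_eq (κ := κ) (h' := h') hn hR q' u' u)
    simpa only [abs_mul, abs_of_pos hu, abs_of_pos hv, abs_of_pos (pow_pos hR (n - 1)),
      abs_of_nonneg (by linarith : 0 ≤ (n : ℝ) - 1)] using habs
  calc |radialFlux n κ h' R q' u'| * q + |radialSource n κ h' R q' u'| * u
      = R ^ (n - 1) * (|PhiHat1 n κ h' q' (u' / R)| * q
          + ((n : ℝ) - 1) * (|PhiHat2 n κ h' q' (u' / R)| * (u / R))) := by
        rw [hsource, radialFlux, abs_mul, abs_of_pos (pow_pos hR _)]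
        ring
    _ ≤ R ^ (n - 1) * (n * (|PhiHat1 n κ h' q' (u' / R)| * q
          + |PhiHat2 n κ h' q' (u' / R)| * (u / R))) := by
        have h1 : 0 ≤ |PhiHat1 n κ h' q' (u' / R)| * q := by positivity
        have h2 : 0 ≤ |PhiHat2 n κ h' q' (u' / R)| * (u / R) := by positivity
        gcongr
        nlinarith
    _ ≤ R ^ (n - 1) * (n * (B * energyControl n h q (u / R))) := by
        gcongr
        exact hle q (u / R) q' (u' / R) hq hv hq' hv'
    _ = n * B * (R ^ (n - 1) * energyControl n h q (u / R)) := by ring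

theorem Adm.aemeasurable_comp_stretches (hadm : Adm lam r r') {F : ℝ × ℝ → ℝ}
    (hF : ContinuousOn F (Ioi 0 ×ˢ Ioi 0)) :
    AEMeasurable (fun R => F (r' R, r R / R)) (volume.restrict (Ioc 0 1)) := by
  refine aemeasurable_comp_of_continuousOn hF (measurableSet_Ioi.prod measurableSet_Ioi)
    (hadm.intg.aemeasurable.prodMk (((hadm.continuousOn.mono Ioc_subset_Icc_self).aemeasurable
      measurableSet_Ioc).div aemeasurable_id)) ?_
  filter_upwards [hadm.derivPos, ae_restrict_mem measurableSet_Ioc] with R hR' hR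
  exact ⟨hR', div_pos (hadm.pos hR) hR.1⟩

theorem Adm.aestronglyMeasurable_radialDensity (hadm : Adm lam r r')
    (hh : ContinuousOn h (Ioi 0)) :
    AEStronglyMeasurable (fun R => radialDensity n κ h R (r' R) (r R))
      (volume.restrict (Ioc 0 1)) :=
  ((aemeasurable_id.pow_const _).mul
    (hadm.aemeasurable_comp_stretches (continuousOn_PhiHat hh))).aestronglyMeasurable

theorem Adm.aestronglyMeasurable_radialFlux (hadm : Adm lam r r')
    (hh : ContinuousOn h' (Ioi 0)) :
    AEStronglyMeasurable (fun R => radialFlux n κ h' R (r' R) (r R))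
      (volume.restrict (Ioc 0 1)) :=
  ((aemeasurable_id.pow_const _).mul
    (hadm.aemeasurable_comp_stretches (continuousOn_PhiHat1 hh))).aestronglyMeasurable

theorem Adm.aestronglyMeasurable_radialSource (hadm : Adm lam r r')
    (hh : ContinuousOn h' (Ioi 0)) :
    AEStronglyMeasurable (fun R => radialSource n κ h' R (r' R) (r R))
      (volume.restrict (Ioc 0 1)) :=
  (((aemeasurable_id.pow_const _).const_mul _).mul
    (hadm.aemeasurable_comp_stretches (continuousOn_PhiHat2 hh))).aestronglyMeasurable

theorem Adm.integrableOn_of_eintegral_ne_top (hadm : Adm lam r r') (hn : 2 ≤ n) (hκ : 0 < κ)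
    (hh : ContinuousOn h (Ioi 0)) (hh_nonneg : ∀ d, 0 < d → 0 ≤ h d)
    (htop : eintegral (volume.restrict (Ioc 0 1))
      (fun R => radialDensity n κ h R (r' R) (r R)) ≠ ⊤) :
    IntegrableOn (fun R => radialDensity n κ h R (r' R) (r R)) (Ioc 0 1) ∧
      IntegrableOn (fun R => R ^ (n - 1) * energyControl n h (r' R) (r R / R)) (Ioc 0 1) := by
  obtain ⟨C, hC, C', hle⟩ := exists_pow_mul_energyControl_le hn hκ hh_nonneg lam
  have herr : IntegrableOn (fun R => C' * r' R + 1) (Ioc 0 1) :=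
    (hadm.intg.const_mul C').add (integrableOn_const measure_Ioc_lt_top.ne)
  have hbounds : ∀ᵐ R ∂volume.restrict (Ioc 0 1),
      0 ≤ R ^ (n - 1) * energyControl n h (r' R) (r R / R) ∧
      R ^ (n - 1) * energyControl n h (r' R) (r R / R)
        ≤ C * radialDensity n κ h R (r' R) (r R) + (C' * r' R + 1) := by
    filter_upwards [hadm.derivPos, ae_restrict_mem measurableSet_Ioc] with R hR' hR
    exact ⟨mul_nonneg (pow_pos hR.1 _).le
      (energyControl_nonneg hh_nonneg hR' (div_pos (hadm.pos hR) hR.1)),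
      hle R _ _ hR.1 hR.2 hR' (hadm.pos hR) (hadm.le_lam (Ioc_subset_Icc_self hR))⟩
  have hdensity : IntegrableOn (fun R => radialDensity n κ h R (r' R) (r R)) (Ioc 0 1) := by
    refine integrable_of_eintegral_ne_top
      (hadm.aestronglyMeasurable_radialDensity hh).aemeasurable (herr.const_mul C⁻¹) ?_ htop
    filter_upwards [hbounds] with R hR
    rw [← mul_neg, inv_mul_le_iff₀ hC]
    linarith
  refine ⟨hdensity, ((hdensity.const_mul C).add herr).mono' ((aemeasurable_id.pow_const _).mul
    (hadm.aemeasurable_comp_stretches (continuousOn_energyControl hh))).aestronglyMeasurable ?_⟩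
  filter_upwards [hbounds] with R hR
  rw [Real.norm_of_nonneg hR.1]
  exact hR.2

theorem integrableOn_radialDensity_const_mul_id (n : ℕ) (κ lam : ℝ) (h : ℝ → ℝ) :
    IntegrableOn (fun R => radialDensity n κ h R lam (lam * R)) (Ioc 0 1) := by
  have hpow : IntegrableOn (fun R : ℝ => R ^ (n - 1) * PhiHat n κ h lam lam) (Ioc 0 1) :=
    (by fun_prop : Continuous fun R : ℝ => R ^ (n - 1) * PhiHat n κ h lam lam).integrableOn_Ioc
  refine hpow.congr_fun (fun R hR => ?_) measurableSet_Ioc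
  rw [radialDensity, mul_div_cancel_right₀ _ hR.1.ne']

theorem IHatE_eq_coe (hint : IntegrableOn (fun R => radialDensity n κ h R (r' R) (r R)) (Ioc 0 1)) :
    IHatE n κ lam h r r' = (((∫ R in Ioc (0 : ℝ) 1, radialDensity n κ h R (r' R) (r R))
      - κ * ((n : ℝ) - 1) / n * lam ^ n * log lam : ℝ) : EReal) := by
  rw [EReal.coe_sub, ← eintegral_eq_coe_integral hint]
  rfl

theorem eintegral_radialDensity_ne_top (hfin : IHatE n κ lam h r r' ≠ ⊤) :
    eintegral (volume.restrict (Ioc 0 1)) (fun R => radialDensity n κ h R (r' R) (r R)) ≠ ⊤ :=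
  fun htop => hfin (by
    change eintegral _ (fun R => radialDensity n κ h R (r' R) (r R)) - _ = _
    rw [htop, EReal.top_sub_coe])

theorem Adm.integrableOn_of_isMinimizer (hadm : Adm lam r r') (hn : 2 ≤ n) (hκ : 0 < κ)
    (hh : ContinuousOn h (Ioi 0)) (hh_nonneg : ∀ d, 0 < d → 0 ≤ h d)
    (hmin : ∀ s s', Adm lam s s' → IHatE n κ lam h r r' ≤ IHatE n κ lam h s s') :
    IntegrableOn (fun R => radialDensity n κ h R (r' R) (r R)) (Ioc 0 1) ∧
      IntegrableOn (fun R => R ^ (n - 1) * energyControl n h (r' R) (r R / R)) (Ioc 0 1) := by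
  refine hadm.integrableOn_of_eintegral_ne_top hn hκ hh hh_nonneg
    (eintegral_radialDensity_ne_top (lam := lam) (ne_top_of_le_ne_top ?_
      (hmin _ _ (adm_const_mul_id hadm.lam_pos))))
  rw [IHatE_eq_coe (integrableOn_radialDensity_const_mul_id n κ lam h)]
  exact EReal.coe_ne_top _

theorem pos_of_abs_sub_le_mul {τ a b : ℝ} (hτ : τ < 1) (hb : 0 < b) (hab : |a - b| ≤ τ * b) :
    0 < a := by
  have := (abs_le.1 hab).1
  nlinarith

theorem Adm.weakStationary_of_isMinimizer (hadm : Adm lam r r') (hn : 2 ≤ n) (hκ : 0 < κ)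
    (hh : VolumetricEnergy h h') (hγ₀ : 0 < γ₀) (hctrl : ControlCondition h h' K γ₀)
    (hmin : ∀ s s', Adm lam s s' → IHatE n κ lam h r r' ≤ IHatE n κ lam h s s') :
    WeakStationary r r' (fun R => radialFlux n κ h' R (r' R) (r R))
      (fun R => radialSource n κ h' R (r' R) (r R)) := by
  intro η hη
  obtain ⟨B, τ, hτ, hτ1, hle⟩ :=
    hctrl.exists_abs_radialFlux_mul_add_le hh.nonneg hκ.le hn hγ₀
  obtain ⟨hdensity, hcontrol⟩ :=
    hadm.integrableOn_of_isMinimizer hn hκ hh.continuousOn hh.nonneg hmin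
  have hφ_cont : ContinuousOn (fun R => ∫ t in (1 : ℝ)..R, η t) (Icc 0 1) :=
    ((continuousOn_integral_right hη.integrableOn zero_le_one).sub continuousOn_const).congr
      fun R hR => intervalIntegral_eq_sub_setIntegral hη.integrableOn hR
  have hφ_meas := (hφ_cont.mono Ioc_subset_Icc_self).aestronglyMeasurable (μ := volume)
    measurableSet_Ioc
  refine integral_firstVariation_eq_zero hτ hη.abs_le ?_ (fun t ht =>
    (hadm.add_mul hη (ht.trans hτ1)).aestronglyMeasurable_radialDensity hh.continuousOn)
    hdensity (((hadm.aestronglyMeasurable_radialFlux hh.continuousOn_deriv).mul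
      hη.integrableOn.1).add
      ((hadm.aestronglyMeasurable_radialSource hh.continuousOn_deriv).mul hφ_meas))
    ?_ ?_ (hcontrol.const_mul B) fun t ht hint => ?_
  · filter_upwards [ae_restrict_mem measurableSet_Ioc] with R hR using
      hη.abs_integral_le R (Ioc_subset_Icc_self hR)
  · filter_upwards [hadm.derivPos, ae_restrict_mem measurableSet_Ioc] with R hR' hR q u hq hu
    exact hh.hasFDerivAt_radialDensity hn hR.1 (pos_of_abs_sub_le_mul hτ1 hR' hq)
      (pos_of_abs_sub_le_mul hτ1 (hadm.pos hR) hu)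
  · filter_upwards [hadm.derivPos, ae_restrict_mem measurableSet_Ioc] with R hR' hR q u hq hu
    exact hle R (r' R) (r R) q u hR.1 hR' (hadm.pos hR) hq hu
  · have hcompare := hmin _ _ (hadm.add_mul hη (ht.trans hτ1))
    rw [IHatE_eq_coe hdensity, IHatE_eq_coe hint, EReal.coe_le_coe_iff] at hcompare
    exact (sub_le_sub_iff_right _).1 hcompare

theorem Adm.integrableOn_radialFlux_mul (hadm : Adm lam r r') (hn : 2 ≤ n) (hκ : 0 ≤ κ)
    (hh : VolumetricEnergy h h') (hγ₀ : 0 < γ₀) (hctrl : ControlCondition h h' K γ₀)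
    (hcontrol : IntegrableOn (fun R => R ^ (n - 1) * energyControl n h (r' R) (r R / R))
      (Ioc 0 1)) :
    IntegrableOn (fun R => radialFlux n κ h' R (r' R) (r R) * r' R) (Ioc 0 1) ∧
      IntegrableOn (fun R => radialSource n κ h' R (r' R) (r R) * r R) (Ioc 0 1) := by
  obtain ⟨B, τ, hτ, -, hle⟩ := hctrl.exists_abs_radialFlux_mul_add_le hh.nonneg hκ hn hγ₀
  have hbound : ∀ᵐ R ∂volume.restrict (Ioc 0 1),
      ‖radialFlux n κ h' R (r' R) (r R) * r' R‖ + ‖radialSource n κ h' R (r' R) (r R) * r R‖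
        ≤ B * (R ^ (n - 1) * energyControl n h (r' R) (r R / R)) := by
    filter_upwards [hadm.derivPos, ae_restrict_mem measurableSet_Ioc] with R hR' hR
    have hr := hadm.pos hR
    rw [norm_mul, norm_mul, Real.norm_of_nonneg hR'.le, Real.norm_of_nonneg hr.le]
    refine hle R _ _ _ _ hR.1 hR' hr ?_ ?_ <;> rw [sub_self, abs_zero] <;> positivity
  constructor
  · refine (hcontrol.const_mul B).mono' ((hadm.aestronglyMeasurable_radialFlux
      hh.continuousOn_deriv).mul hadm.intg.1) ?_
    filter_upwards [hbound] with R hR using (le_add_of_nonneg_right (norm_nonneg _)).trans hR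
  · refine (hcontrol.const_mul B).mono' ((hadm.aestronglyMeasurable_radialSource
      hh.continuousOn_deriv).mul ((hadm.continuousOn.mono Ioc_subset_Icc_self).aestronglyMeasurable
        measurableSet_Ioc)) ?_
    filter_upwards [hbound] with R hR using (le_add_of_nonneg_left (norm_nonneg _)).trans hR

theorem VolumetricEnergy.strictMonoOn_radialFlux (hh : VolumetricEnergy h h') (hκ : 0 < κ)
    (hn : 2 ≤ n) {R u : ℝ} (hR : 0 < R) (hu : 0 < u) :
    StrictMonoOn (radialFlux n κ h' R · u) (Ioi 0) := fun _ hq _ hq' hlt =>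
  mul_lt_mul_of_pos_left (hh.strictMonoOn_PhiHat1 hκ hn (div_pos hu hR) hq hq' hlt) (pow_pos hR _)

theorem VolumetricEnergy.exists_radialFlux_eq (hh : VolumetricEnergy h h') (hκ : 0 < κ)
    (hn : 2 ≤ n) {R u : ℝ} (hR : 0 < R) (hu : 0 < u) (c : ℝ) :
    ∃ q, 0 < q ∧ radialFlux n κ h' R q u = c := by
  obtain ⟨q, hq, heq⟩ := hh.exists_PhiHat1_eq hκ hn (div_pos hu hR) (c / R ^ (n - 1))
  exact ⟨q, hq, by rw [radialFlux, heq, mul_div_cancel₀ _ (pow_pos hR _).ne']⟩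

theorem Adm.continuousOn_comp_stretches (hadm : Adm lam r r') {F : ℝ × ℝ → ℝ}
    (hF : ContinuousOn F (Ioi 0 ×ˢ Ioi 0)) {ρ : ℝ → ℝ} (hρ : ContinuousOn ρ (Ioc 0 1))
    (hρ_pos : ∀ R ∈ Ioc (0 : ℝ) 1, 0 < ρ R) :
    ContinuousOn (fun R => F (ρ R, r R / R)) (Ioc 0 1) :=
  hF.comp (hρ.prodMk ((hadm.continuousOn.mono Ioc_subset_Icc_self).div continuousOn_id
    fun _ hR => hR.1.ne')) fun R hR => ⟨hρ_pos R hR, div_pos (hadm.pos hR) hR.1⟩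

theorem Adm.continuousOn_radialFlux (hadm : Adm lam r r') (hh : ContinuousOn h' (Ioi 0))
    {ρ : ℝ → ℝ} (hρ : ContinuousOn ρ (Ioc 0 1)) (hρ_pos : ∀ R ∈ Ioc (0 : ℝ) 1, 0 < ρ R) :
    ContinuousOn (fun R => radialFlux n κ h' R (ρ R) (r R)) (Ioc 0 1) :=
  (continuousOn_id.pow _).mul
    (hadm.continuousOn_comp_stretches (continuousOn_PhiHat1 hh) hρ hρ_pos)

theorem Adm.continuousOn_radialSource (hadm : Adm lam r r') (hh : ContinuousOn h' (Ioi 0))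
    {ρ : ℝ → ℝ} (hρ : ContinuousOn ρ (Ioc 0 1)) (hρ_pos : ∀ R ∈ Ioc (0 : ℝ) 1, 0 < ρ R) :
    ContinuousOn (fun R => radialSource n κ h' R (ρ R) (r R)) (Ioc 0 1) :=
  (continuousOn_const.mul (continuousOn_id.pow _)).mul
    (hadm.continuousOn_comp_stretches (continuousOn_PhiHat2 hh) hρ hρ_pos)

theorem Adm.exists_continuousOn_radialFlux_eq (hadm : Adm lam r r') (hn : 2 ≤ n) (hκ : 0 < κ)
    (hh : VolumetricEnergy h h') {H : ℝ → ℝ} (hH : ContinuousOn H (Ioc 0 1))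
    (hflux : (fun R => radialFlux n κ h' R (r' R) (r R)) =ᵐ[volume.restrict (Ioc 0 1)] H) :
    ∃ ρ : ℝ → ℝ, ContinuousOn ρ (Ioc 0 1) ∧ (∀ R ∈ Ioc (0 : ℝ) 1, 0 < ρ R) ∧
      r' =ᵐ[volume.restrict (Ioc 0 1)] ρ ∧
      ∀ R ∈ Ioc (0 : ℝ) 1, radialFlux n κ h' R (ρ R) (r R) = H R := by
  have hsol : ∀ R, ∃ q, R ∈ Ioc (0 : ℝ) 1 → 0 < q ∧ radialFlux n κ h' R q (r R) = H R :=
    fun R => by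
      by_cases hR : R ∈ Ioc (0 : ℝ) 1
      · exact (hh.exists_radialFlux_eq hκ hn hR.1 (hadm.pos hR) (H R)).imp fun _ hq _ => hq
      · exact ⟨0, fun hR' => absurd hR' hR⟩
  choose ρ hρ using hsol
  have hmono : ∀ R ∈ Ioc (0 : ℝ) 1, StrictMonoOn (radialFlux n κ h' R · (r R)) (Ioi 0) :=
    fun R hR => hh.strictMonoOn_radialFlux hκ hn hR.1 (hadm.pos hR)
  refine ⟨ρ, continuousOn_of_strictMonoOn_of_apply_eq (b₀ := 0)
    (fun b hb => hadm.continuousOn_radialFlux hh.continuousOn_deriv continuousOn_const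
      fun _ _ => hb) hmono hH (fun R hR => (hρ R hR).1) fun R hR => (hρ R hR).2,
    fun R hR => (hρ R hR).1, ?_, fun R hR => (hρ R hR).2⟩
  filter_upwards [hflux, hadm.derivPos, ae_restrict_mem measurableSet_Ioc] with R hR_flux hR' hR
  exact (hmono R hR).injOn hR' (hρ R hR).1 (hR_flux.trans (hρ R hR).2.symm)

theorem intervalIntegral_congr_of_ae_eq {f g : ℝ → ℝ} {a b x : ℝ}
    (hfg : f =ᵐ[volume.restrict (Ioc a b)] g) (hx : x ∈ Ioc a b) :
    ∫ t in x..b, f t = ∫ t in x..b, g t := by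
  rw [intervalIntegral.integral_of_le hx.2, intervalIntegral.integral_of_le hx.2]
  exact integral_congr_ae
    (ae_mono (Measure.restrict_mono (Ioc_subset_Ioc_left hx.1.le) le_rfl) hfg)

theorem Adm.hasDerivWithinAt (hadm : Adm lam r r') {ρ : ℝ → ℝ} (hρ : ContinuousOn ρ (Ioc 0 1))
    (hae : r' =ᵐ[volume.restrict (Ioc 0 1)] ρ) {R : ℝ} (hR : R ∈ Ioc (0 : ℝ) 1) :
    HasDerivWithinAt r (ρ R) (Ioc 0 1) R := by
  refine hasDerivWithinAt_of_eq_sub_integral (c := r 1) hρ (fun R hR => ?_) hR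
  rw [← intervalIntegral_congr_of_ae_eq hae hR,
    hadm.integral_deriv (Ioc_subset_Icc_self hR) (right_mem_Icc.2 zero_le_one), sub_sub_cancel]

theorem Adm.tendsto_THat_zero (hadm : Adm lam r r') (hr0 : 0 < r 0) {ρ Q : ℝ → ℝ}
    (hQ : IntegrableOn Q (Ioc 0 1))
    (hflux : ∀ R ∈ Ioc (0 : ℝ) 1,
      radialFlux n κ h' R (ρ R) (r R) = (∫ t in (0 : ℝ)..1, Q t) - ∫ t in R..1, Q t) :
    Tendsto (fun R => THat n κ h' (ρ R) (r R / R)) (nhdsWithin 0 (Ioi 0)) (nhds 0) := by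
  have hle : nhdsWithin (0 : ℝ) (Ioi 0) ≤ nhdsWithin 0 (Icc 0 1) :=
    nhdsWithin_le_of_mem (mem_of_superset (Ioc_mem_nhdsGT one_pos) Ioc_subset_Icc_self)
  have hmem0 : (0 : ℝ) ∈ Icc 0 1 := left_mem_Icc.2 zero_le_one
  have hflux_zero : Tendsto (fun R => ∫ t in (0 : ℝ)..R, Q t) (nhdsWithin 0 (Ioi 0)) (nhds 0) := by
    simpa only [intervalIntegral.integral_same] using
      (continuousOn_integral_right hQ zero_le_one 0 hmem0).tendsto.mono_left hle
  have hcavity : Tendsto (fun R => r R ^ (n - 1)) (nhdsWithin 0 (Ioi 0)) (nhds (r 0 ^ (n - 1))) :=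
    ((hadm.continuousOn 0 hmem0).tendsto.mono_left hle).pow _
  have hquot := hflux_zero.div hcavity (pow_pos hr0 _).ne'
  rw [zero_div] at hquot
  refine hquot.congr' ?_
  filter_upwards [Ioc_mem_nhdsGT one_pos] with R hR
  have hsplit := intervalIntegral.integral_interval_sub_left
    (intervalIntegrable_of_integrableOn_Ioc hQ hmem0 (right_mem_Icc.2 zero_le_one))
    (intervalIntegrable_of_integrableOn_Ioc hQ hmem0 (Ioc_subset_Icc_self hR))
  have hrR := hadm.pos hR
  rw [Pi.div_apply, div_eq_iff (pow_pos hrR _).ne', mul_comm,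
    ← pow_mul_PhiHat1_eq_pow_mul_THat hR.1 hrR, ← radialFlux, hflux R hR, ← hsplit, sub_sub_cancel]

end RadialEnergy

theorem stmt11_general {n : ℕ} (hn : 2 ≤ n) {κ : ℝ} (hκ : 0 < κ) {h h' : ℝ → ℝ}
    (hh : VolumetricEnergy h h') {K γ₀ : ℝ} (hγ₀ : 0 < γ₀) (hctrl : ControlCondition h h' K γ₀)
    {lam : ℝ} {r r' : ℝ → ℝ} (hadm : Adm lam r r')
    (hmin : ∀ s s' : ℝ → ℝ, Adm lam s s' → IHatE n κ lam h r r' ≤ IHatE n κ lam h s s') :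
    ∃ ρ : ℝ → ℝ, ContinuousOn ρ (Ioc 0 1) ∧
      (∀ R ∈ Ioc (0 : ℝ) 1, HasDerivWithinAt r (ρ R) (Ioc 0 1) R) ∧
      (∀ R ∈ Ioc (0 : ℝ) 1, 0 < ρ R) ∧
      ContinuousOn (fun R => ((n : ℝ) - 1) * R ^ (n - 2) * PhiHat2 n κ h' (ρ R) (r R / R))
        (Ioc 0 1) ∧
      (∀ R ∈ Ioc (0 : ℝ) 1,
        HasDerivWithinAt (fun s => s ^ (n - 1) * PhiHat1 n κ h' (ρ s) (r s / s))
          (((n : ℝ) - 1) * R ^ (n - 2) * PhiHat2 n κ h' (ρ R) (r R / R)) (Ioc 0 1) R) ∧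
      (0 < r 0 →
        Tendsto (fun R => THat n κ h' (ρ R) (r R / R)) (nhdsWithin 0 (Ioi 0)) (nhds 0)) := by
  obtain ⟨-, hcontrol⟩ := hadm.integrableOn_of_isMinimizer hn hκ hh.continuousOn hh.nonneg hmin
  obtain ⟨hPr', hQr⟩ := hadm.integrableOn_radialFlux_mul hn hκ.le hh hγ₀ hctrl hcontrol
  have hP_meas := hadm.aestronglyMeasurable_radialFlux (n := n) (κ := κ) hh.continuousOn_deriv
  have hQ_meas := hadm.aestronglyMeasurable_radialSource (n := n) (κ := κ) hh.continuousOn_deriv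
  have hQ := fun a ha => hadm.integrableOn_of_integrableOn_mul (a := a) hQ_meas hQr ha
  have hstat := hadm.weakStationary_of_isMinimizer hn hκ hh hγ₀ hctrl hmin
  obtain ⟨C, hC⟩ := hstat.exists_ae_eq_sub_integral hadm hP_meas hQ_meas hPr' hQr
  have htail := continuousOn_integral_left fun R hR => hQ R (Ioc_subset_Icc_self hR) (hadm.pos hR)
  obtain ⟨ρ, hρ, hρ_pos, hae, hflux⟩ :=
    hadm.exists_continuousOn_radialFlux_eq hn hκ hh (continuousOn_const.sub htail) hC
  have hρQ := hadm.continuousOn_radialSource (n := n) (κ := κ) hh.continuousOn_deriv hρ hρ_pos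
  refine ⟨ρ, hρ, fun R hR => hadm.hasDerivWithinAt hρ hae hR, hρ_pos, hρQ, fun R hR => ?_,
    fun hr0 => ?_⟩
  · refine hasDerivWithinAt_of_eq_sub_integral (c := C) hρQ (fun s hs => ?_) hR
    refine (hflux s hs).trans (congrArg (C - ·) (intervalIntegral_congr_of_ae_eq ?_ hs))
    filter_upwards [hae] with t ht using by rw [ht]
  · have hQ0 := hQ 0 (left_mem_Icc.2 zero_le_one) hr0
    obtain rfl := hstat.const_eq_integral_of_pos hadm hr0 hQ0 hPr' hQr hC
    exact hadm.tendsto_THat_zero hr0 hQ0 hflux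

/-- a minimizer of `Î` over `𝒜_λ` is `C¹` on `(0,1]` with positive
derivative `ρ`, satisfies the modified equilibrium equation there (with the map
`R ↦ R^{n−1}Φ̂_{,1}` being `C¹`), and if `r(0) > 0` then `T̂(r(R)) → 0` as `R → 0⁺`. -/
theorem stmt11 (n : ℕ) (hn : 2 ≤ n) (κ : ℝ) (hκ : 0 < κ)
    (h h' h'' : ℝ → ℝ) (hh : GoodH h h' h'')
    (K γ₀ : ℝ) (hK : 0 < K) (hγ₀ : 0 < γ₀)
    (hctrl : ∀ d : ℝ, 0 < d → ∀ c : ℝ, |c - 1| ≤ γ₀ → |d * h' (c * d)| ≤ K * (h d + 1))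
    (lam : ℝ) (hlam : 0 < lam) (r r' : ℝ → ℝ) (hadm : Adm lam r r')
    (hmin : ∀ s s' : ℝ → ℝ, Adm lam s s' → IHatE n κ lam h r r' ≤ IHatE n κ lam h s s') :
    ∃ ρ : ℝ → ℝ, ContinuousOn ρ (Set.Ioc 0 1) ∧
      (∀ R ∈ Set.Ioc (0:ℝ) 1, HasDerivWithinAt r (ρ R) (Set.Ioc 0 1) R) ∧
      (∀ R ∈ Set.Ioc (0:ℝ) 1, 0 < ρ R) ∧
      ContinuousOn (fun R => ((n:ℝ) - 1) * R ^ (n - 2) * PhiHat2 n κ h' (ρ R) (r R / R))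
        (Set.Ioc 0 1) ∧
      (∀ R ∈ Set.Ioc (0:ℝ) 1,
        HasDerivWithinAt (fun s => s ^ (n - 1) * PhiHat1 n κ h' (ρ s) (r s / s))
          (((n:ℝ) - 1) * R ^ (n - 2) * PhiHat2 n κ h' (ρ R) (r R / R)) (Set.Ioc 0 1) R) ∧
      (0 < r 0 →
        Tendsto (fun R => THat n κ h' (ρ R) (r R / R)) (nhdsWithin 0 (Set.Ioi 0)) (nhds 0)) := by
  exact stmt11_general hn hκ hh.volumetricEnergy hγ₀ hctrl hadm hmin

end
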